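/- Let p_1,…,p_m ∈ ℕ with each p_i ≥ 2 and Σ_{i=1}^m 1/p_i < m−1. For every nontrivial conjugacy class K of Γ_{p_1,…,p_m}: if K ⊄ L_{p_1,…,p_m} then 𝔼[Z_K(H_n)] = o(n) as n → ∞, while if K ⊆ L_{p_1,…,p_m} then 𝔼[Z_K(H_n)] ∼ n as n → ∞. (By the fixed-point characterisation of weak-* convergence of invariant random subgroups, this expresses that the uniform random index n subgroup H_n converges, as an invariant random subgroup of Γ_{p_1,…,p_m}, to the Dirac mass at L_{p_1,…,p_m}.) -/

import Mathlib

open Filter Topology Asymptotics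
open scoped TensorProduct

/-- the relations `x_i ^ p_i = x_j ^ p_j` defining `Γ_{p_1,…,p_m}` -/
def torusRels (m : ℕ) (p : Fin m → ℕ) : Set (FreeGroup (Fin m)) :=
  {w : FreeGroup (Fin m) | ∃ i j : Fin m, w = FreeGroup.of i ^ p i * (FreeGroup.of j ^ p j)⁻¹}

/-- the group `Γ_{p_1,…,p_m} = ⟨x_1,…,x_m ∣ x_1^{p_1} = ⋯ = x_m^{p_m}⟩` -/
abbrev TorusKnotGroup (m : ℕ) (p : Fin m → ℕ) : Type :=
  PresentedGroup (torusRels m p)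

/-- the relations `x_i ^ p_i = 1` defining `C_{p_1} * ⋯ * C_{p_m}` -/
def cyclicRels (m : ℕ) (p : Fin m → ℕ) : Set (FreeGroup (Fin m)) :=
  {w : FreeGroup (Fin m) | ∃ i : Fin m, w = FreeGroup.of i ^ p i}

/-- the free product `C_{p_1} * ⋯ * C_{p_m}` of cyclic groups of orders `p_1, …, p_m`,
presented as `⟨x_1,…,x_m ∣ x_1^{p_1} = ⋯ = x_m^{p_m} = 1⟩`. -/
abbrev CyclicFreeProduct (m : ℕ) (p : Fin m → ℕ) : Type :=
  PresentedGroup (cyclicRels m p)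

theorem cyclicFreeProduct_gen_pow (m : ℕ) (p : Fin m → ℕ) (i : Fin m) :
    (PresentedGroup.of (rels := cyclicRels m p) i) ^ p i = 1 := by
  have : PresentedGroup.mk (cyclicRels m p) (FreeGroup.of i ^ p i) = 1 := by
    apply (QuotientGroup.eq_one_iff _).mpr
    exact Subgroup.subset_normalClosure ⟨i, rfl⟩
  rw [map_pow] at this
  exact this

/-- the projection `Φ_{p_1,…,p_m} : Γ_{p_1,…,p_m} → C_{p_1} * ⋯ * C_{p_m}`,
sending each generator `x_j` to the fixed generator of `C_{p_j}`;
its kernel is `L_{p_1,…,p_m}`. -/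
noncomputable def PhiMap (m : ℕ) (p : Fin m → ℕ) :
    TorusKnotGroup m p →* CyclicFreeProduct m p :=
  PresentedGroup.toGroup (f := fun i => PresentedGroup.of i) (by
    rintro w ⟨i, j, rfl⟩
    simp only [map_mul, map_pow, map_inv, FreeGroup.lift_apply_of]
    rw [cyclicFreeProduct_gen_pow, cyclicFreeProduct_gen_pow]
    simp)

/-- `Z_g(H)`: the number of fixed points of `g` acting on the coset space `G ⧸ H`.
For any `g` in a conjugacy class `K`, this equals `Z_K(H)`. -/
noncomputable def fixedCosetCount {G : Type*} [Group G] (g : G) (H : Subgroup G) : ℕ :=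
  Nat.card {x : G ⧸ H // g • x = x}

/-- the expectation of `f` over a uniformly random index `n` subgroup of `G` -/
noncomputable def subgroupExp (G : Type*) [Group G] (n : ℕ) (f : Subgroup G → ℝ) : ℝ :=
  (∑' H : {H : Subgroup G // H.index = n}, f H.1) /
    (Nat.card {H : Subgroup G // H.index = n} : ℝ)

/-- number of permutations of `n` points with `τ ^ p = 1` -/
noncomputable def rootCount (p n : ℕ) : ℕ := Nat.card {τ : Equiv.Perm (Fin n) // τ ^ p = 1}

lemma rootCount_eq (p : ℕ) (α : Type*) [Finite α] :
    Nat.card {τ : Equiv.Perm α // τ ^ p = 1} = rootCount p (Nat.card α) := by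
  unfold rootCount
  refine Nat.card_congr ?_
  refine Equiv.subtypeEquiv (Finite.equivFin α).permCongrHom.toEquiv ?_
  intro τ
  change τ ^ p = 1 ↔ ((Finite.equivFin α).permCongrHom τ) ^ p = 1
  rw [← map_pow, MulEquiv.map_eq_one_iff]

lemma rootCount_pos (p n : ℕ) : 0 < rootCount p n := by
  unfold rootCount
  have : Nonempty {τ : Equiv.Perm (Fin n) // τ ^ p = 1} := ⟨⟨1, one_pow p⟩⟩
  exact Nat.card_pos

lemma card_roots_sum (p : ℕ) (γ β : Type*) [Finite γ] [Finite β] (r : Equiv.Perm γ)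
    (hr : r ^ p = 1) :
    Nat.card {τ : Equiv.Perm (γ ⊕ β) // τ ^ p = 1 ∧ ∀ j, τ (Sum.inl j) = Sum.inl (r j)}
      = rootCount p (Nat.card β) := by
  rw [← rootCount_eq p β]
  symm
  refine Nat.card_congr (Equiv.ofBijective
    (fun σ => ⟨Equiv.Perm.sumCongrHom γ β (r, σ.1), ?_, ?_⟩) ⟨?_, ?_⟩)
  · rw [← map_pow, Prod.pow_mk, hr, σ.2]
    exact map_one _
  · intro j; simp
  · intro σ σ' h
    have h1 := congrArg Subtype.val h
    have h2 := Equiv.Perm.sumCongrHom_injective h1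
    exact Subtype.ext (congrArg Prod.snd h2)
  · rintro ⟨τ, h1, h2⟩
    obtain ⟨⟨a, b⟩, hab⟩ := Equiv.Perm.mem_sumCongrHom_range_of_perm_mapsTo_inl (σ := τ) (by
      rintro _ ⟨j, rfl⟩
      exact ⟨r j, (h2 j).symm⟩)
    have ha : a = r := by
      ext1 j
      have := h2 j
      rw [← hab] at this
      simpa using this
    subst ha
    refine ⟨⟨b, ?_⟩, Subtype.ext hab⟩
    have h3 : Equiv.Perm.sumCongrHom γ β ((a, b) ^ p) = Equiv.Perm.sumCongrHom γ β 1 := by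
      rw [map_pow, hab, h1, map_one]
    exact congrArg Prod.snd (Equiv.Perm.sumCongrHom_injective h3)

lemma card_roots_emb (p k : ℕ) (α : Type*) [Finite α] (s : Fin k ↪ α) (r : Equiv.Perm (Fin k))
    (hr : r ^ p = 1) :
    Nat.card {τ : Equiv.Perm α // τ ^ p = 1 ∧ ∀ j, τ (s j) = s (r j)}
      = rootCount p (Nat.card α - k) := by
  classical
  let e : (Fin k) ⊕ ((Set.range s)ᶜ : Set α) ≃ α :=
    (Equiv.sumCongr (Equiv.ofInjective s s.injective) (Equiv.refl _)).trans
      (Equiv.Set.sumCompl (Set.range s))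
  have he : ∀ j, e (Sum.inl j) = s j := by
    intro j; simp [e]
  have he' : ∀ j, e.symm (s j) = Sum.inl j := by
    intro j; rw [Equiv.symm_apply_eq, he]
  have hc : Nat.card ((Set.range s)ᶜ : Set α) = Nat.card α - k := by
    have := Nat.card_congr e
    rw [Nat.card_sum, Nat.card_fin] at this
    omega
  rw [← hc, ← card_roots_sum p (Fin k) _ r hr]
  symm
  refine Nat.card_congr (Equiv.subtypeEquiv e.permCongrHom.toEquiv ?_)
  intro τ
  change _ ↔ (e.permCongrHom τ) ^ p = 1 ∧ ∀ j, (e.permCongr τ) (s j) = s (r j)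
  rw [← map_pow, MulEquiv.map_eq_one_iff]
  refine and_congr Iff.rfl (forall_congr' fun j => ?_)
  rw [Equiv.permCongr_apply, he', ← he (r j)]
  simp

/-- pairs (root, embedded partial pattern) -/
lemma card_pairs (p k n : ℕ) (r : Equiv.Perm (Fin k)) (hr : r ^ p = 1) :
    Nat.card {x : Equiv.Perm (Fin n) × (Fin k ↪ Fin n) //
      x.1 ^ p = 1 ∧ ∀ j, x.1 (x.2 j) = x.2 (r j)} = n.descFactorial k * rootCount p (n - k) := by
  have e : {x : Equiv.Perm (Fin n) × (Fin k ↪ Fin n) //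
      x.1 ^ p = 1 ∧ ∀ j, x.1 (x.2 j) = x.2 (r j)} ≃
      Σ s : Fin k ↪ Fin n, {τ : Equiv.Perm (Fin n) // τ ^ p = 1 ∧ ∀ j, τ (s j) = s (r j)} :=
    { toFun := fun x => ⟨x.1.2, x.1.1, x.2⟩
      invFun := fun y => ⟨(y.2.1, y.1), y.2.2⟩
      left_inv := fun x => rfl
      right_inv := fun x => rfl }
  rw [Nat.card_congr e, Nat.card_sigma]
  simp_rw [card_roots_emb p k (Fin n) _ r hr, Nat.card_fin]
  rw [Finset.sum_const, Finset.card_univ, Fintype.card_embedding_eq]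
  simp

lemma finRotate_pow_apply (e : ℕ) (j : ℕ) :
    ∀ x : Fin (e+1), (((finRotate (e+1)) ^ j) x).val = (x.val + j) % (e+1) := by
  induction j with
  | zero => intro x; simp [Nat.mod_eq_of_lt x.2]
  | succ j ih =>
    intro x
    rw [pow_succ', Equiv.Perm.mul_apply, finRotate_apply, Fin.val_add, ih]
    rw [← add_assoc, Nat.add_mod (x.val + j) 1]
    simp

lemma finRotate_pow_eq_one (e p : ℕ) (h : (e+1) ∣ p) : (finRotate (e+1)) ^ p = 1 := by
  ext x
  rw [finRotate_pow_apply]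
  obtain ⟨c, rfl⟩ := h
  simp [Nat.mod_eq_of_lt x.2]

lemma card_period (p n e : ℕ) (he : 0 < e) (hep : e ∣ p) :
    Nat.card {x : Equiv.Perm (Fin n) × Fin n //
      x.1 ^ p = 1 ∧ Function.minimalPeriod x.1 x.2 = e} = n.descFactorial e * rootCount p (n - e) := by
  obtain ⟨e, rfl⟩ : ∃ e', e = e' + 1 := ⟨e - 1, by omega⟩
  rw [← card_pairs p (e+1) n (finRotate (e+1)) (finRotate_pow_eq_one e p hep)]
  refine Nat.card_congr
    { toFun := fun x => ⟨(x.1.1, ⟨fun j => (x.1.1 ^ (j : ℕ)) x.1.2, ?_⟩), x.2.1, ?_⟩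
      invFun := fun y => ⟨(y.1.1, y.1.2 0), y.2.1, ?_⟩
      left_inv := ?_
      right_inv := ?_ }
  · intro i j hij
    have := x.2.2
    simp only [Equiv.Perm.coe_pow] at hij
    exact Fin.ext (Function.iterate_injOn_Iio_minimalPeriod (by rw [this]; exact i.2)
      (by rw [this]; exact j.2) hij)
  · intro j
    change x.1.1 ((x.1.1 ^ (j : ℕ)) x.1.2) = (x.1.1 ^ ((finRotate (e+1) j : Fin (e+1)) : ℕ)) x.1.2
    have h1 : ((finRotate (e+1)) j : ℕ) = (j.val + 1) % (e+1) := by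
      have := finRotate_pow_apply e 1 j
      rwa [pow_one] at this
    rw [h1, ← Equiv.Perm.mul_apply, ← pow_succ', Equiv.Perm.coe_pow, Equiv.Perm.coe_pow]
    have h3 := Function.iterate_mod_minimalPeriod_eq (f := x.1.1) (x := x.1.2) (n := j.val + 1)
    rw [x.2.2] at h3
    exact h3.symm
  · have hy := y.2.2
    have hs : ∀ j : ℕ, (y.1.1 ^ j) (y.1.2 0) = y.1.2 (((finRotate (e+1)) ^ j) 0) := by
      intro j
      induction j with
      | zero => simp
      | succ j ih => rw [pow_succ', Equiv.Perm.mul_apply, ih, hy, pow_succ', Equiv.Perm.mul_apply]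
    apply Nat.dvd_antisymm
    · apply Function.IsPeriodicPt.minimalPeriod_dvd
      change (y.1.1)^[e+1] (y.1.2 0) = y.1.2 0
      rw [← Equiv.Perm.coe_pow, hs, finRotate_pow_eq_one e (e+1) dvd_rfl]
      rfl
    · have h1 : (y.1.1)^[Function.minimalPeriod y.1.1 (y.1.2 0)] (y.1.2 0) = y.1.2 0 :=
        Function.isPeriodicPt_minimalPeriod _ _
      rw [← Equiv.Perm.coe_pow, hs] at h1
      have h2 := congrArg Fin.val (y.1.2.injective h1)
      rw [finRotate_pow_apply] at h2
      simp at h2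
      exact Nat.dvd_of_mod_eq_zero h2
  · intro x
    rfl
  · intro y
    have hy := y.2.2
    have hs : ∀ j : ℕ, (y.1.1 ^ j) (y.1.2 0) = y.1.2 (((finRotate (e+1)) ^ j) 0) := by
      intro j
      induction j with
      | zero => simp
      | succ j ih => rw [pow_succ', Equiv.Perm.mul_apply, ih, hy, pow_succ', Equiv.Perm.mul_apply]
    apply Subtype.ext
    apply Prod.ext
    · rfl
    · ext1 j
      change (y.1.1 ^ (j : ℕ)) (y.1.2 0) = y.1.2 j
      rw [hs]
      congr 1
      apply Fin.ext
      rw [finRotate_pow_apply]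
      simp
      omega

lemma rootCount_rec (p n : ℕ) (hp : 0 < p) :
    n * rootCount p n = ∑ e ∈ p.divisors, n.descFactorial e * rootCount p (n - e) := by
  classical
  have h1 : n * rootCount p n = Nat.card {x : Equiv.Perm (Fin n) × Fin n // x.1 ^ p = 1} := by
    have e : {x : Equiv.Perm (Fin n) × Fin n // x.1 ^ p = 1} ≃
        {τ : Equiv.Perm (Fin n) // τ ^ p = 1} × Fin n :=
      { toFun := fun x => (⟨x.1.1, x.2⟩, x.1.2)
        invFun := fun y => ⟨(y.1.1, y.2), y.1.2⟩
        left_inv := fun x => rfl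
        right_inv := fun x => rfl }
    rw [Nat.card_congr e, Nat.card_prod, Nat.card_fin, mul_comm]; rfl
  rw [h1, Nat.card_eq_fintype_card, Fintype.card_subtype]
  rw [Finset.card_eq_sum_card_fiberwise (f := fun x => Function.minimalPeriod x.1 x.2)
    (t := p.divisors)]
  · refine Finset.sum_congr rfl fun e he => ?_
    rw [← card_period p n e (Nat.pos_of_mem_divisors he) (Nat.dvd_of_mem_divisors he),
      Nat.card_eq_fintype_card, Fintype.card_subtype, Finset.filter_filter]
  · intro x hx
    simp only [Finset.coe_filter, Finset.mem_univ, true_and, Set.mem_ofPred_eq] at hx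
    simp only [Finset.mem_coe, Nat.mem_divisors]
    refine ⟨?_, hp.ne'⟩
    apply Function.IsPeriodicPt.minimalPeriod_dvd
    change (x.1)^[p] x.2 = x.2
    rw [← Equiv.Perm.coe_pow, hx]; rfl

lemma sum_fix_descFactorial (p n k : ℕ) :
    ∑ τ : {τ : Equiv.Perm (Fin n) // τ ^ p = 1},
      (Nat.card {x : Fin n // τ.1 x = x}).descFactorial k
      = n.descFactorial k * rootCount p (n - k) := by
  classical
  rw [← card_pairs p k n 1 (one_pow p)]
  have e : {x : Equiv.Perm (Fin n) × (Fin k ↪ Fin n) //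
      x.1 ^ p = 1 ∧ ∀ j, x.1 (x.2 j) = x.2 ((1 : Equiv.Perm (Fin k)) j)} ≃
      Σ τ : {τ : Equiv.Perm (Fin n) // τ ^ p = 1}, (Fin k ↪ {x : Fin n // τ.1 x = x}) :=
    { toFun := fun x => ⟨⟨x.1.1, x.2.1⟩, ⟨fun j => ⟨x.1.2 j, x.2.2 j⟩, fun i j hij =>
          x.1.2.injective (congrArg Subtype.val hij)⟩⟩
      invFun := fun y => ⟨(y.1.1, ⟨fun j => (y.2 j).1, fun i j hij =>
          y.2.injective (Subtype.ext hij)⟩), y.1.2, fun j => (y.2 j).2⟩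
      left_inv := fun x => rfl
      right_inv := fun x => rfl }
  rw [Nat.card_congr e, Nat.card_sigma]
  refine Finset.sum_congr rfl fun τ _ => ?_
  rw [Nat.card_eq_fintype_card, Nat.card_eq_fintype_card, Fintype.card_embedding_eq, Fintype.card_fin]

lemma card_invariant_le (p n : ℕ) (S : Finset (Fin n)) :
    Nat.card {τ : Equiv.Perm (Fin n) // τ ^ p = 1 ∧ ∀ x ∈ S, τ x ∈ S} ≤
      rootCount p S.card * rootCount p (n - S.card) := by
  classical
  let s0 : Fin S.card ≃ S := S.equivFin.symm
  let s : Fin S.card ↪ Fin n := ⟨fun j => (s0 j).1, fun i j hij => s0.injective (Subtype.ext hij)⟩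
  have h1 : Nat.card (Σ r : {r : Equiv.Perm (Fin S.card) // r ^ p = 1},
      {τ : Equiv.Perm (Fin n) // τ ^ p = 1 ∧ ∀ j, τ (s j) = s (r.1 j)})
      = rootCount p S.card * rootCount p (n - S.card) := by
    rw [Nat.card_sigma]
    have : ∀ r : {r : Equiv.Perm (Fin S.card) // r ^ p = 1},
      Nat.card {τ : Equiv.Perm (Fin n) // τ ^ p = 1 ∧ ∀ j, τ (s j) = s (r.1 j)}
        = rootCount p (n - S.card) := by
      intro r
      rw [card_roots_emb p _ (Fin n) s r.1 r.2, Nat.card_fin]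
    rw [Finset.sum_congr rfl (fun r _ => this r), Finset.sum_const, Finset.card_univ,
      ← Nat.card_eq_fintype_card]
    rfl
  rw [← h1]
  -- surjection from the sigma type
  refine Nat.card_le_card_of_surjective (fun y => ⟨y.2.1, y.2.2.1, ?_⟩) ?_
  · intro x hx
    have : x = s (s0.symm ⟨x, hx⟩) := by
      change x = (s0 (s0.symm ⟨x, hx⟩)).1
      rw [Equiv.apply_symm_apply]
    rw [this, y.2.2.2]
    exact (s0 _).2
  · rintro ⟨τ, h1, h2⟩
    have hinj : Function.Injective (fun j => s0.symm ⟨τ (s j), h2 _ (s0 j).2⟩) := by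
      intro i j hij
      have := s0.symm.injective hij
      exact s.injective (τ.injective (congrArg Subtype.val this))
    let r : Equiv.Perm (Fin S.card) := Equiv.ofBijective _ (Finite.injective_iff_bijective.mp hinj)
    have hr : ∀ j, τ (s j) = s (r j) := by
      intro j
      change τ (s j) = (s0 (s0.symm ⟨τ (s j), h2 _ (s0 j).2⟩)).1
      rw [Equiv.apply_symm_apply]
    have hk : ∀ k : ℕ, ∀ j, (τ ^ k) (s j) = s ((r ^ k) j) := by
      intro k
      induction k with
      | zero => simp
      | succ k ih => intro j; rw [pow_succ', pow_succ', Equiv.Perm.mul_apply, ih, hr]; rfl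
    have hrp : r ^ p = 1 := by
      ext1 j
      apply s.injective
      rw [← hk, h1]; rfl
    exact ⟨⟨⟨r, hrp⟩, ⟨τ, h1, hr⟩⟩, rfl⟩

/-- normalised root count `t_p(n) / n!` -/
noncomputable def rootDens (p n : ℕ) : ℝ := (rootCount p n : ℝ) / (n.factorial : ℝ)

lemma rootDens_pos (p n : ℕ) : 0 < rootDens p n := by
  unfold rootDens
  have := rootCount_pos p n
  positivity

lemma rootCount_zero (p : ℕ) : rootCount p 0 = 1 := by
  have h2 := rootCount_pos p 0
  have : rootCount p 0 ≤ Nat.card (Equiv.Perm (Fin 0)) :=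
    Nat.card_le_card_of_injective _ Subtype.val_injective
  simp at this
  omega

lemma rootDens_desc (p n e : ℕ) (he : e ≤ n) :
    ((n.descFactorial e * rootCount p (n - e) : ℕ) : ℝ) = n.factorial * rootDens p (n - e) := by
  unfold rootDens
  have h1 := Nat.factorial_mul_descFactorial he
  have h2 : ((n - e).factorial : ℝ) ≠ 0 := by positivity
  rw [← h1]
  push_cast
  field_simp

lemma rootDens_rec (p n : ℕ) (hp : 0 < p) :
    (n : ℝ) * rootDens p n = ∑ e ∈ p.divisors, if e ≤ n then rootDens p (n - e) else 0 := by
  have h := rootCount_rec p n hp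
  have h3 : (n.factorial : ℝ) ≠ 0 := by positivity
  have h1 : ((n * rootCount p n : ℕ) : ℝ) = n.factorial * (n * rootDens p n) := by
    unfold rootDens
    push_cast
    field_simp
  rw [h, Nat.cast_sum] at h1
  apply mul_left_cancel₀ h3
  rw [← h1, Finset.mul_sum]
  refine Finset.sum_congr rfl fun e _ => ?_
  split_ifs with he
  · rw [rootDens_desc p n e he]
  · rw [Nat.descFactorial_of_lt (by omega)]; simp

lemma fix_pointwise (p j : ℕ) (hp : 0 < p) (y : ℝ) (hy : 0 < y) :
    (j : ℝ) ≤ (p - 1 + y) + ((j.descFactorial p : ℝ) - y ^ p) / (p * y ^ (p - 1)) := by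
  have h1 : (((j + 1 - p : ℕ) : ℝ)) ^ p ≤ (j.descFactorial p : ℝ) := by
    exact_mod_cast Nat.pow_sub_le_descFactorial j p
  set x : ℝ := ((j + 1 - p : ℕ) : ℝ) with hx
  have hx0 : 0 ≤ x := Nat.cast_nonneg _
  have hxj : (j : ℝ) + 1 - p ≤ x := by
    rw [hx, sub_le_iff_le_add]
    have : j + 1 ≤ (j + 1 - p) + p := by omega
    exact_mod_cast this
  have hb := one_add_mul_le_pow (a := x / y - 1) (by have : 0 ≤ x / y := by positivity
                                                     linarith) p
  have hb2 : y ^ p + p * y ^ (p-1) * (x - y) ≤ x ^ p := by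
    have h5 : (1 + (x / y - 1)) ^ p * y ^ p = x ^ p := by
      rw [← mul_pow]; congr 1; field_simp; ring
    have h6 : y ^ p = y ^ (p-1) * y := by
      rw [← pow_succ]; congr 1; omega
    rw [← h5]
    refine le_trans (le_of_eq ?_) (mul_le_mul_of_nonneg_right hb (by positivity))
    rw [h6]; field_simp
  have hc : 0 < (p : ℝ) * y ^ (p-1) := by positivity
  have : x - y ≤ ((j.descFactorial p : ℝ) - y ^ p) / (p * y ^ (p - 1)) := by
    rw [le_div_iff₀ hc]; nlinarith
  linarith

lemma rootDens_ratio (p n : ℕ) (hp : 0 < p) :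
    rootDens p n ≤ (((n + 1 : ℕ) : ℝ) ^ ((1 : ℝ) / p) + (p - 1)) * rootDens p (n + 1) := by
  set y : ℝ := ((n + 1 : ℕ) : ℝ) ^ ((1 : ℝ) / p) with hy
  have hy0 : 0 < y := by positivity
  have hyp : y ^ p = ((n + 1 : ℕ) : ℝ) := by
    rw [hy, ← Real.rpow_natCast, ← Real.rpow_mul (by positivity)]
    rw [one_div_mul_cancel (by positivity), Real.rpow_one]
  have h1 := sum_fix_descFactorial p (n+1) 1
  have h2 := sum_fix_descFactorial p (n+1) p
  have h3 : (n+1).descFactorial p * rootCount p (n + 1 - p) ≤ (n+1) * rootCount p (n+1) := by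
    rw [rootCount_rec p (n+1) hp]
    exact Finset.single_le_sum (f := fun e => (n+1).descFactorial e * rootCount p (n + 1 - e))
      (fun _ _ => Nat.zero_le _) (Nat.mem_divisors_self p hp.ne')
  rw [← h2] at h3
  simp only [Nat.descFactorial_one, Nat.add_sub_cancel] at h1
  have h4 : (((n + 1) * rootCount p n : ℕ) : ℝ) ≤ (y + (p - 1)) * rootCount p (n+1) := by
    rw [← h1]
    push_cast
    have hcard : (Fintype.card {τ : Equiv.Perm (Fin (n+1)) // τ ^ p = 1} : ℝ)
        = rootCount p (n+1) := by
      rw [← Nat.card_eq_fintype_card]; rfl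
    refine (Finset.sum_le_sum fun τ _ => fix_pointwise p _ hp y hy0).trans ?_
    rw [Finset.sum_add_distrib, Finset.sum_const, Finset.card_univ, ← Finset.sum_div,
      Finset.sum_sub_distrib, Finset.sum_const, Finset.card_univ, nsmul_eq_mul, nsmul_eq_mul, hcard,
      hyp]
    have h5 : (∑ τ : {τ : Equiv.Perm (Fin (n+1)) // τ ^ p = 1},
      ((Nat.card {x : Fin (n+1) // τ.1 x = x}).descFactorial p : ℝ))
        ≤ ((n + 1 : ℕ) : ℝ) * rootCount p (n+1) := by exact_mod_cast h3
    have hc : 0 < (p : ℝ) * y ^ (p-1) := by positivity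
    have h6 : ((∑ τ : {τ : Equiv.Perm (Fin (n+1)) // τ ^ p = 1},
      ((Nat.card {x : Fin (n+1) // τ.1 x = x}).descFactorial p : ℝ)) -
        (rootCount p (n+1) : ℝ) * ((n + 1 : ℕ) : ℝ)) / (p * y ^ (p-1)) ≤ 0 := by
      apply div_nonpos_of_nonpos_of_nonneg _ hc.le
      linarith
    linarith
  unfold rootDens
  rw [Nat.factorial_succ]
  have hf : (0 : ℝ) < n.factorial := by positivity
  rw [mul_div_assoc', div_le_div_iff₀ hf (by positivity)]
  push_cast at h4 ⊢
  nlinarith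

/-- fully normalised count `t_p(n) / n!^(1 - 1/p)` -/
noncomputable def rootNorm (p n : ℕ) : ℝ := rootDens p n * (n.factorial : ℝ) ^ ((1 : ℝ) / p)

/-- control sequence -/
noncomputable def ctrl (p n : ℕ) : ℝ :=
  ∏ i ∈ Finset.range n, (1 + (p : ℝ) * (((i + 1 : ℕ) : ℝ) ^ (-((1 : ℝ) / p))))

lemma rootNorm_pos (p n : ℕ) : 0 < rootNorm p n := by
  unfold rootNorm
  have := rootDens_pos p n
  positivity

lemma ctrl_pos (p n : ℕ) : 0 < ctrl p n := Finset.prod_pos fun i _ => by positivity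

lemma ctrl_mono (p : ℕ) : Monotone (ctrl p) := by
  apply monotone_nat_of_le_succ
  intro n
  unfold ctrl
  rw [Finset.prod_range_succ]
  have := ctrl_pos p n
  unfold ctrl at this
  apply le_mul_of_one_le_right this.le
  have : 0 ≤ (p : ℝ) * (((n + 1 : ℕ) : ℝ) ^ (-((1 : ℝ) / p))) := by positivity
  linarith

lemma one_le_ctrl (p n : ℕ) : 1 ≤ ctrl p n := by
  have := ctrl_mono p (Nat.zero_le n)
  simpa [ctrl] using this

lemma ctrl_succ (p n : ℕ) : ctrl p (n+1) =
    ctrl p n * (1 + (p : ℝ) * (((n + 1 : ℕ) : ℝ) ^ (-((1 : ℝ) / p)))) := by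
  unfold ctrl; rw [Finset.prod_range_succ]

lemma ctrl_le_pow (p n : ℕ) : ctrl p n ≤ (1 + (p : ℝ)) ^ n := by
  have : (1 + (p : ℝ)) ^ n = ∏ i ∈ Finset.range n, (1 + (p : ℝ)) := by simp
  rw [this]
  unfold ctrl
  refine Finset.prod_le_prod (fun i _ => by positivity) fun i _ => ?_
  have : (((i + 1 : ℕ) : ℝ) ^ (-((1 : ℝ) / p))) ≤ 1 := by
    apply Real.rpow_le_one_of_one_le_of_nonpos
    · exact_mod_cast Nat.le_add_left 1 i
    · simp
  have hp : (0 : ℝ) ≤ p := Nat.cast_nonneg _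
  nlinarith

lemma rootNorm_ratio (p n : ℕ) (hp : 0 < p) :
    rootNorm p n ≤ (1 + (p : ℝ) * (((n + 1 : ℕ) : ℝ) ^ (-((1 : ℝ) / p)))) * rootNorm p (n + 1) := by
  unfold rootNorm
  have h := rootDens_ratio p n hp
  rw [Nat.factorial_succ, Nat.cast_mul, Real.mul_rpow (by positivity) (by positivity),
    Real.rpow_neg (by positivity)]
  set y : ℝ := ((n + 1 : ℕ) : ℝ) ^ ((1 : ℝ) / p) with hy
  have hy0 : 0 < y := by positivity
  set f : ℝ := (n.factorial : ℝ) ^ ((1 : ℝ) / p) with hf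
  have hf0 : 0 < f := by positivity
  have h0 := rootDens_pos p (n+1)
  have : (1 + (p : ℝ) * y⁻¹) * (rootDens p (n + 1) * (y * f)) = (y + p) * rootDens p (n+1) * f := by
    field_simp
  rw [this]
  apply mul_le_mul_of_nonneg_right _ hf0.le
  nlinarith

lemma rootNorm_shift (p k l : ℕ) (hp : 0 < p) :
    rootNorm p l ≤ ctrl p k * rootNorm p (l + k) := by
  induction k with
  | zero => simp [ctrl]
  | succ k ih =>
    refine ih.trans ?_
    rw [ctrl_succ, mul_assoc]
    apply mul_le_mul_of_nonneg_left _ (ctrl_pos p k).le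
    refine (rootNorm_ratio p (l+k) hp).trans ?_
    apply mul_le_mul_of_nonneg_right _ (rootNorm_pos _ _).le
    have : ((l + k + 1 : ℕ) : ℝ) ^ (-((1 : ℝ) / p)) ≤ ((k + 1 : ℕ) : ℝ) ^ (-((1 : ℝ) / p)) := by
      apply Real.rpow_le_rpow_of_nonpos (by positivity)
      · exact_mod_cast (by omega : k + 1 ≤ l + k + 1)
      · simp
    have hp' : (0 : ℝ) ≤ p := Nat.cast_nonneg _
    nlinarith

lemma rootNorm_zero (p : ℕ) : rootNorm p 0 = 1 := by
  simp [rootNorm, rootDens, rootCount_zero]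

lemma rootNorm_ge (p n : ℕ) (hp : 0 < p) : 1 ≤ ctrl p n * rootNorm p n := by
  have := rootNorm_shift p n 0 hp
  rwa [rootNorm_zero, zero_add] at this

lemma fact_rpow_le (p n e : ℕ) (he : e ≤ n) :
    (n.factorial : ℝ) ^ ((1 : ℝ) / p) ≤
      ((n - e).factorial : ℝ) ^ ((1 : ℝ) / p) * (n : ℝ) ^ ((e : ℝ) / p) := by
  have h1 : n.factorial ≤ (n - e).factorial * n ^ e := by
    rw [← Nat.factorial_mul_descFactorial he]
    exact Nat.mul_le_mul_left _ (Nat.descFactorial_le_pow n e)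
  have h2 : (n.factorial : ℝ) ≤ ((n - e).factorial : ℝ) * (n : ℝ) ^ e := by exact_mod_cast h1
  have h3 := Real.rpow_le_rpow (by positivity) h2 (by positivity : (0 : ℝ) ≤ 1 / p)
  rw [Real.mul_rpow (by positivity) (by positivity)] at h3
  refine h3.trans (le_of_eq ?_)
  congr 1
  rw [← Real.rpow_natCast, ← Real.rpow_mul (by positivity)]
  congr 1; ring

lemma rootNorm_le_ctrl (p n : ℕ) (hp : 0 < p) : rootNorm p n ≤ ctrl p n := by
  induction n using Nat.strong_induction_on with
  | _ n ih =>
  rcases n with _ | n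
  · rw [rootNorm_zero]; exact one_le_ctrl p 0
  set N : ℝ := ((n + 1 : ℕ) : ℝ) with hN
  have hN1 : 1 ≤ N := by rw [hN]; exact_mod_cast Nat.le_add_left 1 n
  have hN0 : 0 < N := by linarith
  set F : ℝ := ((n+1).factorial : ℝ) ^ ((1 : ℝ) / p) with hF
  have hF0 : 0 ≤ F := by positivity
  have hterm : ∀ e ∈ p.divisors, (if e ≤ n + 1 then rootDens p (n + 1 - e) else 0) * F ≤
      N * ((if e = p then 1 else N ^ (-((1 : ℝ) / p))) * ctrl p n) := by
    intro e he
    have he0 := Nat.pos_of_mem_divisors he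
    have hep := Nat.divisor_le he
    have hpR : (0 : ℝ) < p := by exact_mod_cast hp
    split_ifs with h1 h2 h2
    · subst h2
      have h3 := fact_rpow_le e (n+1) e h1
      have h4 := ih (n + 1 - e) (by omega)
      have h5 := ctrl_mono e (by omega : n + 1 - e ≤ n)
      rw [div_self (by positivity), Real.rpow_one] at h3
      calc _ ≤ rootDens e (n + 1 - e) * (((n + 1 - e).factorial : ℝ) ^ ((1 : ℝ) / e) * N) :=
              mul_le_mul_of_nonneg_left h3 (rootDens_pos _ _).le
        _ = N * rootNorm e (n + 1 - e) := by unfold rootNorm; ring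
        _ ≤ _ := by
          rw [one_mul]
          exact mul_le_mul_of_nonneg_left (h4.trans h5) hN0.le
    · have h3 := fact_rpow_le p (n+1) e h1
      have h4 := ih (n + 1 - e) (by omega)
      have h5 := ctrl_mono p (by omega : n + 1 - e ≤ n)
      have h6 : N ^ ((e : ℝ) / p) ≤ N * N ^ (-((1 : ℝ) / p)) := by
        nth_rewrite 2 [← Real.rpow_one N]
        rw [← Real.rpow_add hN0]
        apply Real.rpow_le_rpow_of_exponent_le hN1
        rw [div_le_iff₀ hpR]
        have : (e : ℝ) + 1 ≤ p := by exact_mod_cast (by omega : e + 1 ≤ p)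
        have h7 : (1 + -(1 / (p : ℝ))) * p = p - 1 := by field_simp; ring
        linarith
      calc _ ≤ rootDens p (n + 1 - e) * (((n + 1 - e).factorial : ℝ) ^ ((1 : ℝ) / p) *
                N ^ ((e : ℝ) / p)) := mul_le_mul_of_nonneg_left h3 (rootDens_pos _ _).le
        _ = N ^ ((e : ℝ) / p) * rootNorm p (n + 1 - e) := by unfold rootNorm; ring
        _ ≤ (N * N ^ (-((1 : ℝ) / p))) * ctrl p n := by
          apply mul_le_mul h6 (h4.trans h5) (rootNorm_pos _ _).le (by positivity)
        _ = _ := by ring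
    · have := ctrl_pos p n
      rw [zero_mul]; positivity
    · have := ctrl_pos p n
      rw [zero_mul]; positivity
  have hrec := rootDens_rec p (n+1) hp
  have h7 : N * rootNorm p (n+1) ≤ N * ctrl p (n+1) := by
    calc N * rootNorm p (n+1) = (N * rootDens p (n+1)) * F := by unfold rootNorm; ring
      _ = ∑ e ∈ p.divisors, (if e ≤ n + 1 then rootDens p (n + 1 - e) else 0) * F := by
        rw [hrec, Finset.sum_mul]
      _ ≤ ∑ e ∈ p.divisors, N * ((if e = p then 1 else N ^ (-((1 : ℝ) / p))) * ctrl p n) :=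
        Finset.sum_le_sum hterm
      _ = N * ((∑ e ∈ p.divisors, (if e = p then 1 else N ^ (-((1 : ℝ) / p)))) * ctrl p n) := by
        rw [← Finset.mul_sum, Finset.sum_mul]
      _ ≤ _ := by
        rw [ctrl_succ, mul_comm (ctrl p n)]
        apply mul_le_mul_of_nonneg_left _ hN0.le
        apply mul_le_mul_of_nonneg_right _ (ctrl_pos p n).le
        rw [← Finset.add_sum_erase _ _ (Nat.mem_divisors_self p hp.ne'), if_pos rfl]
        apply add_le_add le_rfl
        rw [Finset.sum_congr rfl (fun e he => if_neg (Finset.ne_of_mem_erase he)), Finset.sum_const,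
          nsmul_eq_mul]
        apply mul_le_mul_of_nonneg_right _ (by positivity)
        have h8 := Finset.card_erase_le (s := p.divisors) (a := p)
        have h9 := Nat.card_divisors_le_self p
        exact_mod_cast h8.trans h9
  exact le_of_mul_le_mul_left h7 hN0

lemma ctrl_subexp (p : ℕ) (hp : 0 < p) (η : ℝ) (hη : 0 < η) :
    ∃ B : ℝ, 0 < B ∧ ∀ k, ctrl p k ≤ B * Real.exp (η * k) := by
  have hpR : (0 : ℝ) < p := by exact_mod_cast hp
  have ht : Tendsto (fun i : ℕ => 1 + (p : ℝ) * (((i + 1 : ℕ) : ℝ) ^ (-((1 : ℝ) / p)))) atTop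
      (𝓝 (1 + p * 0)) := by
    apply Tendsto.const_add
    apply Tendsto.const_mul
    have h1 := (tendsto_rpow_neg_atTop (by positivity : (0 : ℝ) < 1 / p))
    exact h1.comp (tendsto_natCast_atTop_atTop.comp (tendsto_add_atTop_nat 1))
  have hlt : (1 : ℝ) + p * 0 < Real.exp η := by
    rw [mul_zero, add_zero]; exact Real.one_lt_exp_iff.mpr hη
  obtain ⟨N, hN⟩ := eventually_atTop.mp (ht.eventually (gt_mem_nhds hlt))
  refine ⟨(1 + (p : ℝ)) ^ N, by positivity, fun k => ?_⟩
  induction k with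
  | zero =>
    simp only [ctrl, Finset.range_zero, Finset.prod_empty, Nat.cast_zero, mul_zero, Real.exp_zero,
      mul_one]
    exact one_le_pow₀ (by linarith)
  | succ k ih =>
    rcases lt_or_ge k N with h | h
    · refine (ctrl_le_pow p (k+1)).trans ?_
      have h1 : (1 + (p : ℝ)) ^ (k+1) ≤ (1 + (p : ℝ)) ^ N := pow_le_pow_right₀ (by linarith) h
      have h2 : 1 ≤ Real.exp (η * ((k + 1 : ℕ) : ℝ)) := Real.one_le_exp (by positivity)
      exact h1.trans (le_mul_of_one_le_right (by positivity) h2)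
    · rw [ctrl_succ]
      have h1 := (hN k h).le
      have h2 : Real.exp (η * ((k + 1 : ℕ) : ℝ)) = Real.exp (η * k) * Real.exp η := by
        rw [← Real.exp_add]; congr 1; push_cast; ring
      rw [h2, ← mul_assoc]
      exact mul_le_mul ih h1 (by positivity) (by positivity)

lemma short_cycles_tendsto (p e : ℕ) (he : e < p) :
    Tendsto (fun n : ℕ => ((n.descFactorial e * rootCount p (n - e) : ℕ) : ℝ) /
      (n * rootCount p n)) atTop (𝓝 0) := by
  have hp : 0 < p := by omega
  have hpR : (0 : ℝ) < p := by exact_mod_cast hp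
  have hlim : Tendsto (fun n : ℕ => ctrl p e * ((n : ℝ) ^ (-(1 - (e : ℝ) / p)))) atTop
      (𝓝 (ctrl p e * 0)) := by
    apply Tendsto.const_mul
    have hlt : 0 < 1 - (e : ℝ) / p := by
      rw [sub_pos, div_lt_one hpR]; exact_mod_cast he
    exact (tendsto_rpow_neg_atTop hlt).comp tendsto_natCast_atTop_atTop
  rw [mul_zero] at hlim
  refine squeeze_zero' (Eventually.of_forall fun n => by positivity) ?_ hlim
  filter_upwards [eventually_ge_atTop (e + 1)] with n hn
  have hn0 : (0 : ℝ) < n := by exact_mod_cast (by omega : 0 < n)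
  rw [rootDens_desc p n e (by omega)]
  have hf : (0 : ℝ) < n.factorial := by positivity
  have h1 : (rootCount p n : ℝ) = n.factorial * rootDens p n := by
    unfold rootDens; field_simp
  have hd := rootDens_pos p n
  rw [h1, div_le_iff₀ (by positivity)]
  have h2 := rootNorm_shift p e (n - e) hp
  rw [Nat.sub_add_cancel (by omega)] at h2
  unfold rootNorm at h2
  have h3 := fact_rpow_le p n e (by omega)
  have h4 : rootDens p (n - e) ≤ ctrl p e * (n : ℝ) ^ ((e : ℝ) / p) * rootDens p n := by
    have hg : (0 : ℝ) < ((n - e).factorial : ℝ) ^ ((1 : ℝ) / p) := by positivity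
    apply le_of_mul_le_mul_right _ hg
    refine h2.trans ?_
    have := mul_le_mul_of_nonneg_left h3 (mul_pos (ctrl_pos p e) hd).le
    calc _ = ctrl p e * rootDens p n * (n.factorial : ℝ) ^ ((1 : ℝ) / p) := by ring
      _ ≤ _ := this
      _ = _ := by ring
  have h5 : (n : ℝ) ^ (-(1 - (e : ℝ) / p)) * n = (n : ℝ) ^ ((e : ℝ) / p) := by
    nth_rewrite 2 [← Real.rpow_one (n : ℝ)]
    rw [← Real.rpow_add hn0]; congr 1; ring
  calc (n.factorial : ℝ) * rootDens p (n - e)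
      ≤ n.factorial * (ctrl p e * (n : ℝ) ^ ((e : ℝ) / p) * rootDens p n) :=
        mul_le_mul_of_nonneg_left h4 hf.le
    _ = _ := by rw [← h5]; ring

/-- a tuple of permutations acts transitively -/
def TupTrans {m n : ℕ} (σ : Fin m → Equiv.Perm (Fin n)) : Prop :=
  ∀ S : Finset (Fin n), S.Nonempty → (∀ i, ∀ x ∈ S, σ i x ∈ S) → S = Finset.univ

/-- number of homomorphisms from the free product to `S_n` -/
noncomputable def tupCount (m : ℕ) (p : Fin m → ℕ) (n : ℕ) : ℕ := ∏ i, rootCount (p i) n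

lemma card_pi_subtype {m n : ℕ} (P : Fin m → Equiv.Perm (Fin n) → Prop) :
    Nat.card {σ : Fin m → Equiv.Perm (Fin n) // ∀ i, P i (σ i)} =
      ∏ i, Nat.card {τ : Equiv.Perm (Fin n) // P i τ} := by
  rw [← Nat.card_pi]
  exact Nat.card_congr Equiv.subtypePiEquivPi

lemma card_tup (m : ℕ) (p : Fin m → ℕ) (n : ℕ) :
    Nat.card {σ : Fin m → Equiv.Perm (Fin n) // ∀ i, σ i ^ p i = 1} = tupCount m p n :=
  card_pi_subtype (fun i τ => τ ^ p i = 1)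

lemma tupCount_pos (m : ℕ) (p : Fin m → ℕ) (n : ℕ) : 0 < tupCount m p n :=
  Finset.prod_pos fun _ _ => rootCount_pos _ _

lemma card_tup_inv_le (m : ℕ) (p : Fin m → ℕ) (n : ℕ) (S : Finset (Fin n)) :
    Nat.card {σ : Fin m → Equiv.Perm (Fin n) // ∀ i, σ i ^ p i = 1 ∧ ∀ x ∈ S, σ i x ∈ S} ≤
      ∏ i, (rootCount (p i) S.card * rootCount (p i) (n - S.card)) := by
  rw [card_pi_subtype (fun i τ => τ ^ p i = 1 ∧ ∀ x ∈ S, τ x ∈ S)]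
  exact Finset.prod_le_prod' fun i _ => card_invariant_le _ _ _

lemma perm_inv_compl {n : ℕ} (τ : Equiv.Perm (Fin n)) (S : Finset (Fin n))
    (h : ∀ x ∈ S, τ x ∈ S) : ∀ x ∈ Sᶜ, τ x ∈ Sᶜ := by
  intro x hx
  rw [Finset.mem_compl] at hx ⊢
  intro h2
  have hmap : S.map τ.toEmbedding = S := by
    apply Finset.eq_of_subset_of_card_le
    · intro y hy
      obtain ⟨z, hz, rfl⟩ := Finset.mem_map.mp hy
      exact h z hz
    · rw [Finset.card_map]
  rw [← hmap] at h2
  obtain ⟨z, hz, hzx⟩ := Finset.mem_map.mp h2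
  have : z = x := τ.injective hzx
  exact hx (this ▸ hz)

lemma card_nontrans_le (m : ℕ) (p : Fin m → ℕ) (n : ℕ) :
    Nat.card {σ : Fin m → Equiv.Perm (Fin n) // (∀ i, σ i ^ p i = 1) ∧ ¬ TupTrans σ} ≤
      ∑ k ∈ Finset.range (n+1), n.choose k *
        (if 1 ≤ k ∧ 2 * k ≤ n then ∏ i, (rootCount (p i) k * rootCount (p i) (n - k)) else 0) := by
  classical
  have h0 := Finset.sum_powerset_apply_card (fun k =>
    if 1 ≤ k ∧ 2 * k ≤ n then ∏ i, (rootCount (p i) k * rootCount (p i) (n - k)) else 0)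
    (x := (Finset.univ : Finset (Fin n)))
  simp only [Finset.card_univ, Fintype.card_fin, smul_eq_mul] at h0
  rw [← h0]
  let A : Finset (Fin n) → Finset (Fin m → Equiv.Perm (Fin n)) := fun S =>
    if 1 ≤ S.card ∧ 2 * S.card ≤ n then
      Finset.univ.filter (fun σ => ∀ i, σ i ^ p i = 1 ∧ ∀ x ∈ S, σ i x ∈ S) else ∅
  have hsub : (Finset.univ.filter (fun σ : Fin m → Equiv.Perm (Fin n) =>
      (∀ i, σ i ^ p i = 1) ∧ ¬ TupTrans σ)) ⊆ (Finset.univ : Finset (Fin n)).powerset.biUnion A := by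
    intro σ hσ
    simp only [Finset.mem_filter, Finset.mem_univ, true_and] at hσ
    obtain ⟨h1, h2⟩ := hσ
    unfold TupTrans at h2
    push Not at h2
    obtain ⟨S, hS, hinv, hne⟩ := h2
    have hc : S.card + Sᶜ.card = n := by
      rw [Finset.card_add_card_compl, Fintype.card_fin]
    have hS' : 1 ≤ S.card := Finset.card_pos.mpr hS
    have hS'' : 1 ≤ Sᶜ.card := by
      apply Finset.card_pos.mpr
      rw [Finset.nonempty_iff_ne_empty]
      intro h; exact hne (Finset.compl_eq_empty_iff S |>.mp h)
    rw [Finset.mem_biUnion]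
    rcases le_total S.card Sᶜ.card with h | h
    · refine ⟨S, by simp, ?_⟩
      simp only [A]
      rw [if_pos ⟨hS', by omega⟩]
      simp only [Finset.mem_filter, Finset.mem_univ, true_and]
      exact fun i => ⟨h1 i, hinv i⟩
    · refine ⟨Sᶜ, by simp, ?_⟩
      simp only [A]
      rw [if_pos ⟨hS'', by omega⟩]
      simp only [Finset.mem_filter, Finset.mem_univ, true_and]
      exact fun i => ⟨h1 i, perm_inv_compl _ S (hinv i)⟩
  rw [Nat.card_eq_fintype_card, Fintype.card_subtype]
  refine (Finset.card_le_card hsub).trans (Finset.card_biUnion_le.trans ?_)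
  refine Finset.sum_le_sum fun S _ => ?_
  simp only [A]
  split_ifs with h
  · have := card_tup_inv_le m p n S
    rwa [Nat.card_eq_fintype_card, Fintype.card_subtype] at this
  · simp

lemma le_choose_self : ∀ (n k : ℕ), 1 ≤ k → k < n → n ≤ n.choose k := by
  intro n
  induction n with
  | zero => intro k _ h; omega
  | succ n ih =>
    intro k h1 h2
    obtain ⟨k, rfl⟩ : ∃ k', k = k' + 1 := ⟨k - 1, by omega⟩
    rcases lt_or_ge (k+1) n with h | h
    · rw [Nat.choose_succ_succ']
      have := ih (k+1) h1 h
      have := Nat.choose_pos (show k ≤ n by omega)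
      omega
    · have : k + 1 = n := by omega
      rw [this, Nat.choose_succ_self_right]

lemma two_pow_le_choose (n k : ℕ) (h : 2 * k ≤ n) : 2 ^ k ≤ n.choose k := by
  have h1 : 2 ^ k ≤ k.centralBinom := by
    clear h
    induction k with
    | zero => simp
    | succ k ih =>
      have := Nat.succ_mul_centralBinom_succ k
      have h2 : (k+1) * 2 ^ (k+1) ≤ (k+1) * (k+1).centralBinom := by
        rw [this, pow_succ]; nlinarith
      exact Nat.le_of_mul_le_mul_left h2 (by omega)
  exact h1.trans (Nat.choose_le_choose k h)

lemma rootCount_eq_norm (p n : ℕ) : (rootCount p n : ℝ) =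
    (n.factorial : ℝ) * ((n.factorial : ℝ) ^ ((1 : ℝ) / p))⁻¹ * rootNorm p n := by
  unfold rootNorm rootDens
  have : (n.factorial : ℝ) ≠ 0 := by positivity
  field_simp

/-- single-factor splitting estimate -/
lemma split_factor (p n k : ℕ) (hp : 0 < p) (hk : k ≤ n) :
    (rootCount p k : ℝ) * rootCount p (n - k) ≤
      ((n.choose k : ℝ))⁻¹ * (n.choose k : ℝ) ^ ((1 : ℝ) / p) * ctrl p k ^ 2 * rootCount p n := by
  have h1 := rootNorm_le_ctrl p k hp
  have h2 := rootNorm_shift p k (n - k) hp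
  rw [Nat.sub_add_cancel hk] at h2
  have h3 : rootNorm p k * rootNorm p (n - k) ≤ ctrl p k ^ 2 * rootNorm p n := by
    have := mul_le_mul h1 h2 (rootNorm_pos _ _).le (ctrl_pos _ _).le
    calc _ ≤ _ := this
      _ = _ := by ring
  have hf : (n.factorial : ℝ) = n.choose k * k.factorial * (n - k).factorial := by
    exact_mod_cast (Nat.choose_mul_factorial_mul_factorial hk).symm
  rw [rootCount_eq_norm p k, rootCount_eq_norm p (n-k), rootCount_eq_norm p n, hf]
  have hc : (0 : ℝ) < n.choose k := by exact_mod_cast Nat.choose_pos hk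
  rw [Real.mul_rpow (by positivity) (by positivity), Real.mul_rpow (by positivity) (by positivity)]
  set A : ℝ := (k.factorial : ℝ) * ((k.factorial : ℝ) ^ ((1 : ℝ) / p))⁻¹ with hA
  set B : ℝ := ((n-k).factorial : ℝ) * (((n-k).factorial : ℝ) ^ ((1 : ℝ) / p))⁻¹ with hB
  have hA0 : 0 < A := by positivity
  have hB0 : 0 < B := by positivity
  have hcp : (0 : ℝ) < (n.choose k : ℝ) ^ ((1 : ℝ) / p) := by positivity
  calc A * rootNorm p k * (B * rootNorm p (n-k)) = A * B * (rootNorm p k * rootNorm p (n-k)) := by ring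
    _ ≤ A * B * (ctrl p k ^ 2 * rootNorm p n) := mul_le_mul_of_nonneg_left h3 (by positivity)
    _ = _ := by
      rw [hA, hB]
      field_simp

lemma split_prod (m : ℕ) (p : Fin m → ℕ) (hp : ∀ i, 2 ≤ p i) (n k : ℕ) (hk : k ≤ n) :
    ((n.choose k * ∏ i, (rootCount (p i) k * rootCount (p i) (n - k)) : ℕ) : ℝ) ≤
      (n.choose k : ℝ) ^ (-((m : ℝ) - 1 - ∑ i, (1 : ℝ) / (p i : ℝ))) * (∏ i, ctrl (p i) k ^ 2)
        * tupCount m p n := by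
  have hc : (0 : ℝ) < n.choose k := by exact_mod_cast Nat.choose_pos hk
  push_cast
  unfold tupCount
  have h1 : ∏ i, ((rootCount (p i) k : ℝ) * rootCount (p i) (n - k)) ≤
      ∏ i, (((n.choose k : ℝ))⁻¹ * (n.choose k : ℝ) ^ ((1 : ℝ) / p i) * ctrl (p i) k ^ 2 *
        rootCount (p i) n) :=
    Finset.prod_le_prod (fun i _ => by positivity)
      (fun i _ => split_factor (p i) n k (by have := hp i; omega) hk)
  refine (mul_le_mul_of_nonneg_left h1 hc.le).trans (le_of_eq ?_)
  rw [Finset.prod_mul_distrib, Finset.prod_mul_distrib, Finset.prod_mul_distrib, Finset.prod_const,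
    Finset.card_univ, Fintype.card_fin, ← Real.rpow_sum_of_pos hc]
  have h2 : (n.choose k : ℝ) ^ (-((m : ℝ) - 1 - ∑ i, (1 : ℝ) / (p i : ℝ))) =
      (n.choose k : ℝ) * ((n.choose k : ℝ)⁻¹ ^ m * (n.choose k : ℝ) ^ (∑ i, (1 : ℝ) / (p i : ℝ))) := by
    rw [show -((m : ℝ) - 1 - ∑ i, (1 : ℝ) / (p i : ℝ)) = 1 + (-(m : ℝ) + ∑ i, (1 : ℝ) / (p i : ℝ)) by
      ring, Real.rpow_add hc, Real.rpow_add hc, Real.rpow_one, Real.rpow_neg hc.le,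
      Real.rpow_natCast, inv_pow]
  rw [h2]
  push_cast
  ring

lemma nontrans_tendsto (m : ℕ) (p : Fin m → ℕ) (hp : ∀ i, 2 ≤ p i)
    (h : ∑ i, (1 : ℝ) / (p i : ℝ) < (m : ℝ) - 1) :
    Tendsto (fun n : ℕ =>
      (Nat.card {σ : Fin m → Equiv.Perm (Fin n) // (∀ i, σ i ^ p i = 1) ∧ ¬ TupTrans σ} : ℝ) /
        tupCount m p n) atTop (𝓝 0) := by
  set δ : ℝ := (m : ℝ) - 1 - ∑ i, (1 : ℝ) / (p i : ℝ) with hδ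
  have hδ0 : 0 < δ := by linarith
  have hm : 0 < (m : ℝ) := by
    have : 0 ≤ ∑ i, (1 : ℝ) / (p i : ℝ) := Finset.sum_nonneg fun i _ => by positivity
    linarith
  set η : ℝ := δ * Real.log 2 / (4 * m) with hη
  have hl2 : 0 < Real.log 2 := Real.log_pos (by norm_num)
  have hη0 : 0 < η := by positivity
  have hB := fun i => ctrl_subexp (p i) (by have := hp i; omega) η hη0
  choose B hB0 hBk using hB
  set C : ℝ := ∏ i, (B i) ^ 2 with hC
  have hC0 : 0 < C := Finset.prod_pos fun i _ => by have := hB0 i; positivity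
  -- product of control sequences
  have hctrl : ∀ k : ℕ, ∏ i, ctrl (p i) k ^ 2 ≤ C * (2 : ℝ) ^ ((k : ℝ) * (δ / 2)) := by
    intro k
    have h1 : ∏ i, ctrl (p i) k ^ 2 ≤ ∏ i, (B i ^ 2 * Real.exp (2 * η * k)) := by
      refine Finset.prod_le_prod (fun i _ => by positivity) fun i _ => ?_
      have h2 := pow_le_pow_left₀ (ctrl_pos _ _).le (hBk i k) 2
      refine h2.trans (le_of_eq ?_)
      rw [mul_pow, ← Real.exp_nat_mul]
      congr 2; push_cast; ring
    refine h1.trans (le_of_eq ?_)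
    rw [Finset.prod_mul_distrib, Finset.prod_const, Finset.card_univ, Fintype.card_fin,
      ← Real.exp_nat_mul, Real.rpow_def_of_pos (by norm_num)]
    congr 2
    rw [hη]; field_simp; ring
  set G : ℝ := (2 : ℝ) ^ (-(δ / 4)) with hG
  have hG0 : 0 < G := by positivity
  have hG1 : G < 1 := Real.rpow_lt_one_of_one_lt_of_neg (by norm_num) (by linarith)
  have hmain : ∀ n : ℕ, 1 ≤ n → (Nat.card {σ : Fin m → Equiv.Perm (Fin n) //
      (∀ i, σ i ^ p i = 1) ∧ ¬ TupTrans σ} : ℝ) / tupCount m p n ≤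
      (C * (1 - G)⁻¹) * (n : ℝ) ^ (-(δ / 4)) := by
    intro n hn
    have hT : (0 : ℝ) < tupCount m p n := by exact_mod_cast tupCount_pos m p n
    have hnR : (0 : ℝ) < n := by exact_mod_cast hn
    rw [div_le_iff₀ hT]
    have h1 : (Nat.card {σ : Fin m → Equiv.Perm (Fin n) //
      (∀ i, σ i ^ p i = 1) ∧ ¬ TupTrans σ} : ℝ) ≤ _ := Nat.cast_le.mpr (card_nontrans_le m p n)
    refine h1.trans ?_
    rw [Nat.cast_sum]
    have hterm : ∀ k ∈ Finset.range (n+1), ((n.choose k *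
        (if 1 ≤ k ∧ 2 * k ≤ n then ∏ i, (rootCount (p i) k * rootCount (p i) (n - k)) else 0) : ℕ) : ℝ)
        ≤ G ^ k * (C * (n : ℝ) ^ (-(δ / 4)) * tupCount m p n) := by
      intro k _
      split_ifs with hk
      · have h2 := split_prod m p hp n k (by omega)
        refine h2.trans ?_
        rw [← hδ]
        have hch : (0 : ℝ) < n.choose k := by exact_mod_cast Nat.choose_pos (by omega : k ≤ n)
        have hc1 : (n : ℝ) ≤ n.choose k := by exact_mod_cast le_choose_self n k hk.1 (by omega)
        have hc2 : (2 : ℝ) ^ (k : ℝ) ≤ n.choose k := by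
          rw [Real.rpow_natCast]; exact_mod_cast two_pow_le_choose n k hk.2
        have e1 : (n.choose k : ℝ) ^ (-(δ/4)) ≤ (n : ℝ) ^ (-(δ/4)) :=
          Real.rpow_le_rpow_of_nonpos hnR hc1 (by linarith)
        have e2 : (n.choose k : ℝ) ^ (-(3*δ/4)) ≤ ((2 : ℝ) ^ (k : ℝ)) ^ (-(3*δ/4)) :=
          Real.rpow_le_rpow_of_nonpos (by positivity) hc2 (by linarith)
        have e3 : (n.choose k : ℝ) ^ (-δ) =
            (n.choose k : ℝ) ^ (-(δ/4)) * (n.choose k : ℝ) ^ (-(3*δ/4)) := by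
          rw [← Real.rpow_add hch]; congr 1; ring
        have e4 : ((2 : ℝ) ^ (k : ℝ)) ^ (-(3*δ/4)) * (2 : ℝ) ^ ((k : ℝ) * (δ / 2)) = G ^ k := by
          rw [hG, ← Real.rpow_natCast, ← Real.rpow_mul (by norm_num), ← Real.rpow_mul (by norm_num),
            ← Real.rpow_add (by norm_num)]
          congr 1; ring
        calc _ ≤ ((n : ℝ) ^ (-(δ/4)) * ((2 : ℝ) ^ (k : ℝ)) ^ (-(3*δ/4))) *
              (C * (2 : ℝ) ^ ((k : ℝ) * (δ / 2))) * tupCount m p n := by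
              apply mul_le_mul_of_nonneg_right _ hT.le
              rw [e3]
              apply mul_le_mul _ (hctrl k) (Finset.prod_nonneg fun i _ => by positivity)
                (by positivity)
              exact mul_le_mul e1 e2 (by positivity) (by positivity)
          _ = (((2 : ℝ) ^ (k : ℝ)) ^ (-(3*δ/4)) * (2 : ℝ) ^ ((k : ℝ) * (δ / 2))) *
              (C * (n : ℝ) ^ (-(δ / 4)) * tupCount m p n) := by ring
          _ = _ := by rw [e4]
      · rw [mul_zero, Nat.cast_zero]
        positivity
    refine (Finset.sum_le_sum hterm).trans ?_
    rw [← Finset.sum_mul]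
    have hgeo : ∑ k ∈ Finset.range (n+1), G ^ k ≤ (1 - G)⁻¹ :=
      (Summable.sum_le_tsum _ (fun _ _ => by positivity)
        (summable_geometric_of_lt_one hG0.le hG1)).trans_eq (tsum_geometric_of_lt_one hG0.le hG1)
    refine (mul_le_mul_of_nonneg_right hgeo (by positivity)).trans (le_of_eq ?_)
    ring
  have hlim : Tendsto (fun n : ℕ => (C * (1 - G)⁻¹) * (n : ℝ) ^ (-(δ / 4))) atTop
      (𝓝 ((C * (1 - G)⁻¹) * 0)) := by
    apply Tendsto.const_mul
    exact (tendsto_rpow_neg_atTop (by linarith)).comp tendsto_natCast_atTop_atTop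
  rw [mul_zero] at hlim
  refine squeeze_zero' (Eventually.of_forall fun n => by positivity) ?_ hlim
  filter_upwards [eventually_ge_atTop 1] with n hn using hmain n hn

/-- trajectory of `x` under the successive syllables of a word -/
def traj {m n : ℕ} (σ : Fin m → Equiv.Perm (Fin n)) (I : ℕ → Fin m) (A : ℕ → ℕ) (x : Fin n) :
    ℕ → Fin n
  | 0 => x
  | k + 1 => (σ (I k) ^ A k) (traj σ I A x k)

/-- the vertex reached after step `k` is not on any old cycle (except the one just used) -/
def GoodStep {m n : ℕ} (σ : Fin m → Equiv.Perm (Fin n)) (I : ℕ → Fin m) (A : ℕ → ℕ) (x : Fin n)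
    (k : ℕ) : Prop :=
  ∀ i, i ≠ I k → ∀ l ≤ k, ¬ (σ i).SameCycle (traj σ I A x l) (traj σ I A x (k+1))

/-- first collision at step `k` -/
def BadStep {m n : ℕ} (σ : Fin m → Equiv.Perm (Fin n)) (I : ℕ → Fin m) (A : ℕ → ℕ) (x : Fin n)
    (k : ℕ) : Prop :=
  traj σ I A x (k+1) ≠ traj σ I A x k ∧ ¬ GoodStep σ I A x k ∧ ∀ j < k, GoodStep σ I A x j

lemma traj_sameCycle {m n : ℕ} (σ : Fin m → Equiv.Perm (Fin n)) (I : ℕ → Fin m) (A : ℕ → ℕ)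
    (x : Fin n) (k : ℕ) :
    (σ (I k)).SameCycle (traj σ I A x k) (traj σ I A x (k+1)) :=
  ⟨A k, by simp [traj]⟩

lemma closed_traj {m n : ℕ} (σ : Fin m → Equiv.Perm (Fin n)) (I : ℕ → Fin m) (A : ℕ → ℕ)
    (x : Fin n) (r : ℕ) (hr : 0 < r) (hI : ∀ k, k + 1 < r → I k ≠ I (k+1))
    (hx : traj σ I A x r = x) :
    ∃ k < r, traj σ I A x (k+1) = traj σ I A x k ∨ BadStep σ I A x k := by
  by_contra hcon
  push Not at hcon
  have hgood : ∀ j < r, GoodStep σ I A x j := by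
    intro j
    induction j using Nat.strong_induction_on with
    | _ j ih =>
      intro hj
      by_contra hg
      exact (hcon j hj).2 ⟨(hcon j hj).1, hg, fun l hl => ih l hl (hl.trans hj)⟩
  rcases r with _ | _ | k
  · omega
  · exact (hcon 0 (by omega)).1 hx
  · refine hgood k (by omega) (I (k+1)) (hI k (by omega)).symm 0 (by omega) ?_
    have := traj_sameCycle σ I A x (k+1)
    rw [hx] at this
    exact this.symm

/-- the switched tuple -/
noncomputable def switchTup {m n : ℕ} (σ : Fin m → Equiv.Perm (Fin n)) (i : Fin m) (w u : Fin n) :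
    Fin m → Equiv.Perm (Fin n) :=
  Function.update σ i (Equiv.swap w u * σ i * (Equiv.swap w u)⁻¹)

lemma traj_ne_last {m n : ℕ} (σ : Fin m → Equiv.Perm (Fin n)) (I : ℕ → Fin m) (A : ℕ → ℕ)
    (x : Fin n) (k : ℕ) (hI : ∀ l, l + 1 ≤ k → I l ≠ I (l+1)) (hb : BadStep σ I A x k) :
    ∀ l ≤ k, traj σ I A x l ≠ traj σ I A x (k+1) := by
  intro l hl heq
  rcases Nat.eq_or_lt_of_le hl with h | h
  · subst h; exact hb.1 heq.symm
  · obtain ⟨k', rfl⟩ : ∃ k', k = k' + 1 := ⟨k - 1, by omega⟩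
    refine hb.2.2 k' (by omega) (I (k'+1)) (hI k' (by omega)).symm l (by omega) ?_
    rw [heq]
    exact (traj_sameCycle σ I A x (k'+1)).symm

lemma switch_traj {m n : ℕ} (σ : Fin m → Equiv.Perm (Fin n)) (I : ℕ → Fin m) (A : ℕ → ℕ)
    (x : Fin n) (k : ℕ) (hI : ∀ l, l + 1 ≤ k → I l ≠ I (l+1)) (hb : BadStep σ I A x k)
    (u : Fin n) (hu : ∀ l ≤ k, traj σ I A x l ≠ u) :
    (∀ l ≤ k, traj (switchTup σ (I k) (traj σ I A x (k+1)) u) I A x l = traj σ I A x l) ∧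
    traj (switchTup σ (I k) (traj σ I A x (k+1)) u) I A x (k+1) = u := by
  have hne := traj_ne_last σ I A x k hI hb
  set w := traj σ I A x (k+1) with hw
  have hsw : ∀ l ≤ k, (Equiv.swap w u) (traj σ I A x l) = traj σ I A x l := fun l hl =>
    Equiv.swap_apply_of_ne_of_ne (hne l hl) (hu l hl)
  have hconj : ∀ a : ℕ, ∀ l ≤ k, ((switchTup σ (I k) w u) (I k) ^ a) (traj σ I A x l) =
      (Equiv.swap w u) ((σ (I k) ^ a) (traj σ I A x l)) := by
    intro a l hl
    simp only [switchTup, Function.update_self]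
    rw [conj_pow, Equiv.swap_inv, Equiv.Perm.mul_apply, Equiv.Perm.mul_apply, hsw l hl]
  have h1 : ∀ l ≤ k, traj (switchTup σ (I k) w u) I A x l = traj σ I A x l := by
    intro l
    induction l with
    | zero => intro _; rfl
    | succ l ih =>
      intro hl
      have ih' := ih (by omega)
      change ((switchTup σ (I k) w u) (I l) ^ A l) (traj (switchTup σ (I k) w u) I A x l) =
        (σ (I l) ^ A l) (traj σ I A x l)
      rw [ih']
      by_cases hIl : I l = I k
      · rw [hIl, hconj _ l (by omega), ← hIl]
        exact hsw (l+1) hl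
      · simp [switchTup, Function.update_of_ne hIl]
  refine ⟨h1, ?_⟩
  change ((switchTup σ (I k) w u) (I k) ^ A k) (traj (switchTup σ (I k) w u) I A x k) = u
  rw [h1 k le_rfl, hconj _ k le_rfl]
  change (Equiv.swap w u) w = u
  simp

lemma sameCycle_pow_lt {n p : ℕ} (hp : 0 < p) (τ : Equiv.Perm (Fin n)) (hτ : τ ^ p = 1) {x y : Fin n}
    (h : τ.SameCycle x y) : ∃ b : Fin p, (τ ^ (b : ℕ)) x = y := by
  obtain ⟨i, hi⟩ := h
  have hp' : (0 : ℤ) < p := by exact_mod_cast hp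
  have h0 := Int.emod_nonneg i hp'.ne'
  have h1 := Int.emod_lt_of_pos i hp'
  refine ⟨⟨(i % p).toNat, by omega⟩, ?_⟩
  have h2 : τ ^ (i % p).toNat = τ ^ i := by
    rw [← zpow_natCast, Int.toNat_of_nonneg h0]
    conv_rhs => rw [← Int.emod_add_mul_ediv i p, zpow_add, zpow_mul, zpow_natCast, hτ]
    simp
  rw [h2]; exact hi

lemma card_bad_le {m n : ℕ} (p : Fin m → ℕ) (hp : ∀ i, 2 ≤ p i) (I : ℕ → Fin m) (A : ℕ → ℕ)
    (x : Fin n) (k : ℕ) (hI : ∀ l, l + 1 ≤ k → I l ≠ I (l+1)) :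
    Nat.card {σ : Fin m → Equiv.Perm (Fin n) // (∀ i, σ i ^ p i = 1) ∧ BadStep σ I A x k} *
      (n - (k + 1) * ∑ i, p i) ≤ tupCount m p n * ((k + 1) * ∑ i, p i) := by
  classical
  set C := (k + 1) * ∑ i, p i with hC
  let T := Fin (k+1) × (Σ i : Fin m, Fin (p i))
  have hT : Fintype.card T = C := by
    simp [T, hC]
  let B := {σ : Fin m → Equiv.Perm (Fin n) // (∀ i, σ i ^ p i = 1) ∧ BadStep σ I A x k}
  let old : B → Finset (Fin n) := fun σ =>
    Finset.univ.image (fun t : T => (σ.1 t.2.1 ^ (t.2.2 : ℕ)) (traj σ.1 I A x t.1))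
  have hold : ∀ σ : B, (old σ).card ≤ C := by
    intro σ
    refine Finset.card_image_le.trans ?_
    rw [Finset.card_univ, hT]
  have hkey : ∀ σ : B, ∃ t : T, t.2.1 ≠ I k ∧
      (σ.1 t.2.1 ^ (t.2.2 : ℕ)) (traj σ.1 I A x t.1) = traj σ.1 I A x (k+1) := by
    intro σ
    have h1 := σ.2.2.2.1
    unfold GoodStep at h1
    push Not at h1
    obtain ⟨i, hi, l, hl, hs⟩ := h1
    obtain ⟨b, hb⟩ := sameCycle_pow_lt (by have := hp i; omega) _ (σ.2.1 i) hs
    exact ⟨(⟨l, by omega⟩, ⟨i, b⟩), hi, hb⟩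
  choose key hk1 hk2 using hkey
  have hnotold : ∀ (σ : B) (u : Fin n), u ∉ old σ → ∀ l ≤ k, traj σ.1 I A x l ≠ u := by
    intro σ u hu l hl heq
    apply hu
    refine Finset.mem_image.mpr ⟨(⟨l, by omega⟩, ⟨I k, ⟨0, by have := hp (I k); omega⟩⟩),
      Finset.mem_univ _, ?_⟩
    simpa using heq
  let F : (Σ σ : B, {u : Fin n // u ∉ old σ}) →
      {σ : Fin m → Equiv.Perm (Fin n) // ∀ i, σ i ^ p i = 1} × T := fun y =>
    (⟨switchTup y.1.1 (I k) (traj y.1.1 I A x (k+1)) y.2.1, by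
      intro i
      by_cases h : i = I k
      · subst h
        simp only [switchTup, Function.update_self]
        rw [conj_pow, y.1.2.1, mul_one, mul_inv_cancel]
      · simp only [switchTup, Function.update_of_ne h]
        exact y.1.2.1 i⟩, key y.1)
  have hF : Function.Injective F := by
    rintro ⟨σ1, u1, hu1⟩ ⟨σ2, u2, hu2⟩ h
    have hA : switchTup σ1.1 (I k) (traj σ1.1 I A x (k+1)) u1 =
        switchTup σ2.1 (I k) (traj σ2.1 I A x (k+1)) u2 := congrArg (fun z => z.1.1) h
    have hB : key σ1 = key σ2 := congrArg (fun z => z.2) h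
    obtain ⟨a1, b1⟩ := switch_traj σ1.1 I A x k hI σ1.2.2 u1 (hnotold σ1 u1 hu1)
    obtain ⟨a2, b2⟩ := switch_traj σ2.1 I A x k hI σ2.2.2 u2 (hnotold σ2 u2 hu2)
    have hu : u1 = u2 := by rw [← b1, ← b2, hA]
    have hoff : ∀ i, i ≠ I k → σ1.1 i = σ2.1 i := by
      intro i hi
      have := congrFun hA i
      simpa [switchTup, Function.update_of_ne hi] using this
    have hw : traj σ1.1 I A x (k+1) = traj σ2.1 I A x (k+1) := by
      rw [← hk2 σ1, ← hk2 σ2, ← hB, hoff _ (hk1 σ1)]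
      have hl : ((key σ1).1 : ℕ) ≤ k := Nat.lt_succ_iff.mp (key σ1).1.2
      rw [← a1 _ hl, ← a2 _ hl, hA]
    have hon : σ1.1 (I k) = σ2.1 (I k) := by
      have := congrFun hA (I k)
      simp only [switchTup, Function.update_self, hw, hu] at this
      exact mul_left_cancel (mul_right_cancel this)
    have hσ : σ1 = σ2 := by
      apply Subtype.ext
      funext i
      by_cases h : i = I k
      · rw [h]; exact hon
      · exact hoff i h
    subst hσ
    subst hu
    rfl
  have hcard := Nat.card_le_card_of_injective F hF
  rw [Nat.card_prod, card_tup, Nat.card_eq_fintype_card (α := T), hT, Nat.card_sigma] at hcard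
  refine le_trans ?_ hcard
  rw [Nat.card_eq_fintype_card, ← smul_eq_mul, ← Finset.card_univ, ← Finset.sum_const]
  refine Finset.sum_le_sum fun σ _ => ?_
  rw [Nat.card_eq_fintype_card, Fintype.card_subtype_compl]
  have := hold σ
  simp only [Fintype.card_fin, Fintype.card_coe]
  omega

lemma card_fix_pow_le (p n a : ℕ) (hp : 0 < p) (ha : ¬ p ∣ a) :
    Nat.card {x : Equiv.Perm (Fin n) × Fin n // x.1 ^ p = 1 ∧ (x.1 ^ a) x.2 = x.2} ≤
      ∑ e ∈ p.properDivisors, n.descFactorial e * rootCount p (n - e) := by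
  classical
  rw [Nat.card_eq_fintype_card, Fintype.card_subtype]
  rw [Finset.card_eq_sum_card_fiberwise (f := fun x => Function.minimalPeriod x.1 x.2)
    (t := p.properDivisors)]
  · refine Finset.sum_le_sum fun e he => ?_
    have he' := Nat.mem_properDivisors.mp he
    rw [← card_period p n e (Nat.pos_of_dvd_of_pos he'.1 hp) he'.1,
      Nat.card_eq_fintype_card, Fintype.card_subtype, Finset.filter_filter]
    apply Finset.card_le_card
    intro x hx
    simp only [Finset.mem_filter, Finset.mem_univ, true_and] at hx ⊢
    exact ⟨hx.1.1, hx.2⟩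
  · intro x hx
    simp only [Finset.coe_filter, Finset.mem_univ, true_and, Set.mem_ofPred_eq] at hx
    simp only [Finset.mem_coe, Nat.mem_properDivisors]
    have h1 : Function.minimalPeriod x.1 x.2 ∣ p := by
      apply Function.IsPeriodicPt.minimalPeriod_dvd
      change (x.1)^[p] x.2 = x.2
      rw [← Equiv.Perm.coe_pow, hx.1]; rfl
    have h2 : Function.minimalPeriod x.1 x.2 ∣ a := by
      apply Function.IsPeriodicPt.minimalPeriod_dvd
      change (x.1)^[a] x.2 = x.2
      rw [← Equiv.Perm.coe_pow, hx.2]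
    refine ⟨h1, lt_of_le_of_ne (Nat.le_of_dvd hp h1) ?_⟩
    intro h3
    rw [h3] at h2
    exact ha h2

lemma traj_injective {m n : ℕ} (σ : Fin m → Equiv.Perm (Fin n)) (I : ℕ → Fin m) (A : ℕ → ℕ) (k : ℕ) :
    Function.Injective (fun x => traj σ I A x k) := by
  induction k with
  | zero => exact fun _ _ h => h
  | succ k ih => exact fun x y h => ih ((σ (I k) ^ A k).injective h)

lemma card_stay_le {m n : ℕ} (p : Fin m → ℕ) (hp : ∀ i, 2 ≤ p i) (I : ℕ → Fin m) (A : ℕ → ℕ)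
    (k : ℕ) (hA : ¬ p (I k) ∣ A k) :
    Nat.card {y : (Fin m → Equiv.Perm (Fin n)) × Fin n //
        (∀ i, y.1 i ^ p i = 1) ∧ traj y.1 I A y.2 (k+1) = traj y.1 I A y.2 k} *
      rootCount (p (I k)) n ≤
      tupCount m p n * ∑ e ∈ (p (I k)).properDivisors,
        n.descFactorial e * rootCount (p (I k)) (n - e) := by
  classical
  set i0 := I k with hi0
  let X := {y : (Fin m → Equiv.Perm (Fin n)) × Fin n //
        (∀ i, y.1 i ^ p i = 1) ∧ traj y.1 I A y.2 (k+1) = traj y.1 I A y.2 k}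
  let Y := {x : Equiv.Perm (Fin n) × Fin n // x.1 ^ p i0 = 1 ∧ (x.1 ^ A k) x.2 = x.2}
  let R := {τ : Equiv.Perm (Fin n) // τ ^ p i0 = 1}
  let F : X × R → {σ : Fin m → Equiv.Perm (Fin n) // ∀ i, σ i ^ p i = 1} × Y := fun z =>
    (⟨Function.update z.1.1.1 i0 z.2.1, by
      intro i
      by_cases h : i = i0
      · subst h; rw [Function.update_self]; exact z.2.2
      · rw [Function.update_of_ne h]; exact z.1.2.1 i⟩,
     ⟨(z.1.1.1 i0, traj z.1.1.1 I A z.1.1.2 k), z.1.2.1 i0, z.1.2.2⟩)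
  have hF : Function.Injective F := by
    rintro ⟨⟨⟨σ1, x1⟩, h1⟩, ⟨τ1, t1⟩⟩ ⟨⟨⟨σ2, x2⟩, h2⟩, ⟨τ2, t2⟩⟩ h
    have e1 : Function.update σ1 i0 τ1 = Function.update σ2 i0 τ2 := congrArg (fun z => z.1.1) h
    have e2 : σ1 i0 = σ2 i0 := congrArg (fun z => z.2.1.1) h
    have e3 : traj σ1 I A x1 k = traj σ2 I A x2 k := congrArg (fun z => z.2.1.2) h
    have e4 : τ1 = τ2 := by simpa using congrFun e1 i0
    have e5 : σ1 = σ2 := by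
      funext i
      by_cases hi : i = i0
      · rw [hi]; exact e2
      · simpa [Function.update_of_ne hi] using congrFun e1 i
    subst e5
    have e6 : x1 = x2 := traj_injective σ1 I A k e3
    subst e6
    subst e4
    rfl
  have hc := Nat.card_le_card_of_injective F hF
  rw [Nat.card_prod, Nat.card_prod, card_tup] at hc
  refine hc.trans (Nat.mul_le_mul_left _ ?_)
  exact card_fix_pow_le (p i0) n (A k) (by have := hp i0; omega) hA

lemma word_fix_tendsto (m : ℕ) (p : Fin m → ℕ) (hp : ∀ i, 2 ≤ p i) (I : ℕ → Fin m) (A : ℕ → ℕ)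
    (r : ℕ) (hr : 0 < r) (hI : ∀ k, k + 1 < r → I k ≠ I (k+1)) (hA : ∀ k < r, ¬ p (I k) ∣ A k) :
    Tendsto (fun n : ℕ => (Nat.card {y : (Fin m → Equiv.Perm (Fin n)) × Fin n //
        (∀ i, y.1 i ^ p i = 1) ∧ traj y.1 I A y.2 r = y.2} : ℝ) / (n * tupCount m p n))
      atTop (𝓝 0) := by
  classical
  -- upper bound
  let U : ℕ → ℕ → ℝ := fun n k =>
    (∑ e ∈ (p (I k)).properDivisors, (((n.descFactorial e * rootCount (p (I k)) (n - e) : ℕ) : ℝ) /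
      (n * rootCount (p (I k)) n))) +
      ((((k + 1) * ∑ i, p i : ℕ) : ℝ)) / ((n - (k + 1) * ∑ i, p i : ℕ) : ℝ)
  have hU : Tendsto (fun n => ∑ k ∈ Finset.range r, U n k) atTop (𝓝 (∑ k ∈ Finset.range r, (0 : ℝ))) := by
    apply tendsto_finsetSum
    intro k _
    have h1 : Tendsto (fun n : ℕ => (∑ e ∈ (p (I k)).properDivisors,
      (((n.descFactorial e * rootCount (p (I k)) (n - e) : ℕ) : ℝ) / (n * rootCount (p (I k)) n))))
        atTop (𝓝 (∑ e ∈ (p (I k)).properDivisors, (0 : ℝ))) := by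
      apply tendsto_finsetSum
      intro e he
      exact short_cycles_tendsto _ e (Nat.mem_properDivisors.mp he).2
    have h2 : Tendsto (fun n : ℕ => ((((k + 1) * ∑ i, p i : ℕ) : ℝ)) /
        ((n - (k + 1) * ∑ i, p i : ℕ) : ℝ)) atTop (𝓝 0) := by
      apply Tendsto.const_div_atTop
      exact tendsto_natCast_atTop_atTop.comp (tendsto_sub_atTop_nat _)
    have := h1.add h2
    rw [Finset.sum_const_zero, add_zero] at this
    exact this
  rw [Finset.sum_const_zero] at hU
  refine squeeze_zero' (Eventually.of_forall fun n => by positivity) ?_ hU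
  filter_upwards [eventually_gt_atTop ((r + 1) * ∑ i, p i), eventually_gt_atTop 0] with n hn hn0
  have hnR : (0 : ℝ) < n := by exact_mod_cast hn0
  have hT : (0 : ℝ) < tupCount m p n := by exact_mod_cast tupCount_pos m p n
  let Stay : ℕ → Finset ((Fin m → Equiv.Perm (Fin n)) × Fin n) := fun k =>
    Finset.univ.filter fun y => (∀ i, y.1 i ^ p i = 1) ∧ traj y.1 I A y.2 (k+1) = traj y.1 I A y.2 k
  let Bad : ℕ → Fin n → Finset (Fin m → Equiv.Perm (Fin n)) := fun k x =>
    Finset.univ.filter fun σ => (∀ i, σ i ^ p i = 1) ∧ BadStep σ I A x k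
  have hsub : (Finset.univ.filter fun y : (Fin m → Equiv.Perm (Fin n)) × Fin n =>
      (∀ i, y.1 i ^ p i = 1) ∧ traj y.1 I A y.2 r = y.2) ⊆
      (Finset.range r).biUnion (fun k => Stay k ∪
        (Finset.univ : Finset (Fin n)).biUnion (fun x => (Bad k x).image (fun σ => (σ, x)))) := by
    intro y hy
    simp only [Finset.mem_filter, Finset.mem_univ, true_and] at hy
    obtain ⟨k, hk, hor⟩ := closed_traj y.1 I A y.2 r hr hI hy.2
    refine Finset.mem_biUnion.mpr ⟨k, Finset.mem_range.mpr hk, ?_⟩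
    rcases hor with h | h
    · apply Finset.mem_union_left
      simp only [Stay, Finset.mem_filter, Finset.mem_univ, true_and]
      exact ⟨hy.1, h⟩
    · apply Finset.mem_union_right
      refine Finset.mem_biUnion.mpr ⟨y.2, Finset.mem_univ _, Finset.mem_image.mpr ⟨y.1, ?_, rfl⟩⟩
      simp only [Bad, Finset.mem_filter, Finset.mem_univ, true_and]
      exact ⟨hy.1, h⟩
  have hcard : (Nat.card {y : (Fin m → Equiv.Perm (Fin n)) × Fin n //
        (∀ i, y.1 i ^ p i = 1) ∧ traj y.1 I A y.2 r = y.2}) ≤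
      ∑ k ∈ Finset.range r, ((Stay k).card + ∑ x : Fin n, (Bad k x).card) := by
    rw [Nat.card_eq_fintype_card, Fintype.card_subtype]
    refine (Finset.card_le_card hsub).trans (Finset.card_biUnion_le.trans ?_)
    refine Finset.sum_le_sum fun k _ => (Finset.card_union_le _ _).trans ?_
    refine Nat.add_le_add_left (Finset.card_biUnion_le.trans ?_) _
    exact Finset.sum_le_sum fun x _ => Finset.card_image_le
  rw [div_le_iff₀ (by positivity)]
  refine (Nat.cast_le.mpr hcard).trans ?_
  rw [Finset.sum_mul, Nat.cast_sum]
  refine Finset.sum_le_sum fun k hk => ?_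
  have hk' := Finset.mem_range.mp hk
  have hC : (k + 1) * ∑ i, p i < n := lt_of_le_of_lt (Nat.mul_le_mul_right _ (by omega)) hn
  have hstay : ((Stay k).card : ℝ) ≤ (∑ e ∈ (p (I k)).properDivisors,
      (((n.descFactorial e * rootCount (p (I k)) (n - e) : ℕ) : ℝ) /
      (n * rootCount (p (I k)) n))) * (n * tupCount m p n) := by
    have h1 := card_stay_le (n := n) p hp I A k (hA k hk')
    rw [Nat.card_eq_fintype_card, Fintype.card_subtype] at h1
    have h2 : ((Stay k).card : ℝ) * rootCount (p (I k)) n ≤ tupCount m p n *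
      ∑ e ∈ (p (I k)).properDivisors, ((n.descFactorial e * rootCount (p (I k)) (n - e) : ℕ) : ℝ) := by
      exact_mod_cast h1
    have hrc : (0 : ℝ) < rootCount (p (I k)) n := by exact_mod_cast rootCount_pos _ _
    rw [← Finset.sum_div]
    apply le_of_mul_le_mul_right _ hrc
    refine h2.trans (le_of_eq ?_)
    field_simp
  have hbad : (((∑ x : Fin n, (Bad k x).card : ℕ)) : ℝ) ≤ ((((k + 1) * ∑ i, p i : ℕ) : ℝ)) /
      ((n - (k + 1) * ∑ i, p i : ℕ) : ℝ) * (n * tupCount m p n) := by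
    have hD : (0 : ℝ) < ((n - (k + 1) * ∑ i, p i : ℕ) : ℝ) := by
      exact_mod_cast Nat.sub_pos_of_lt hC
    rw [Nat.cast_sum]
    have h1 : ∀ x ∈ (Finset.univ : Finset (Fin n)), ((Bad k x).card : ℝ) ≤
      ((((k + 1) * ∑ i, p i : ℕ) : ℝ)) / ((n - (k + 1) * ∑ i, p i : ℕ) : ℝ) * tupCount m p n := by
      intro x _
      have h1 := card_bad_le (n := n) p hp I A x k (fun l hl => hI l (by omega))
      rw [Nat.card_eq_fintype_card, Fintype.card_subtype] at h1
      have h2 : ((Bad k x).card : ℝ) * ((n - (k + 1) * ∑ i, p i : ℕ) : ℝ) ≤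
        tupCount m p n * (((k + 1) * ∑ i, p i : ℕ) : ℝ) := by exact_mod_cast h1
      apply le_of_mul_le_mul_right _ hD
      refine h2.trans (le_of_eq ?_)
      field_simp
    refine (Finset.sum_le_sum h1).trans (le_of_eq ?_)
    rw [Finset.sum_const, Finset.card_univ, Fintype.card_fin, nsmul_eq_mul]
    ring
  rw [Nat.cast_add, show U n k = _ from rfl, add_mul]
  exact add_le_add hstay hbad

/-- all cycles have the same length `orderOf z` -/
def SemiReg {n : ℕ} (z : Equiv.Perm (Fin n)) : Prop :=
  ∀ x : Fin n, ∀ k : ℕ, (z ^ k) x = x → orderOf z ∣ k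

lemma semiReg_coords {n : ℕ} (z : Equiv.Perm (Fin n)) (hz : SemiReg z) :
    ∃ (Q : Type) (_ : Fintype Q) (pr : Fin n → Q) (rep : Q → Fin n) (j : Fin n → Fin (orderOf z)),
      (∀ c, pr (rep c) = c) ∧ (∀ x, (z ^ (j x : ℕ)) (rep (pr x)) = x) ∧
      (∀ x y, pr x = pr y ↔ z.SameCycle x y) ∧ Nat.card Q * orderOf z = n := by
  classical
  let s := Equiv.Perm.SameCycle.setoid z
  have hpos : 0 < orderOf z := orderOf_pos z
  have hex : ∀ x : Fin n, ∃ j : Fin (orderOf z),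
      (z ^ (j : ℕ)) (Quotient.out (Quotient.mk s x)) = x := by
    intro x
    have h1 : z.SameCycle (Quotient.out (Quotient.mk s x)) x := Quotient.mk_out (s := s) x
    obtain ⟨k, hk⟩ := h1
    refine ⟨⟨(k % (orderOf z : ℤ)).toNat, ?_⟩, ?_⟩
    · have := Int.emod_lt_of_pos k (by exact_mod_cast hpos : (0 : ℤ) < orderOf z)
      have := Int.emod_nonneg k (by exact_mod_cast hpos.ne' : (orderOf z : ℤ) ≠ 0)
      omega
    · have h0 := Int.emod_nonneg k (by exact_mod_cast hpos.ne' : (orderOf z : ℤ) ≠ 0)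
      have : z ^ ((k % (orderOf z : ℤ)).toNat) = z ^ k := by
        rw [← zpow_natCast, Int.toNat_of_nonneg h0, zpow_mod_orderOf]
      simp only [this, hk]
  choose j hj using hex
  have hrel : ∀ x y, (Quotient.mk s x = Quotient.mk s y) ↔ z.SameCycle x y := fun x y => Quotient.eq
  refine ⟨Quotient s, Fintype.ofFinite _, Quotient.mk s, Quotient.out, j, fun c => Quotient.out_eq c,
    hj, hrel, ?_⟩
  let f : Quotient s × Fin (orderOf z) → Fin n := fun c => (z ^ (c.2 : ℕ)) c.1.out
  have hf : Function.Bijective f := by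
    constructor
    · rintro ⟨c, a⟩ ⟨c', b⟩ h
      simp only [f] at h
      have hc : c = c' := by
        rw [← Quotient.out_eq c, ← Quotient.out_eq c']
        apply (hrel _ _).mpr
        have h1 : z.SameCycle c.out ((z ^ (a : ℕ)) c.out) := ⟨a, by simp⟩
        have h2 : z.SameCycle c'.out ((z ^ (b : ℕ)) c'.out) := ⟨b, by simp⟩
        rw [h] at h1
        exact h1.trans h2.symm
      subst hc
      have key : ∀ a b : Fin (orderOf z), (a : ℕ) ≤ b →
          (z ^ (a : ℕ)) c.out = (z ^ (b : ℕ)) c.out → a = b := by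
        intro a b hab h
        have h3 : (z ^ ((b : ℕ) - a)) c.out = c.out := by
          apply (z ^ (a : ℕ)).injective
          rw [h, ← Equiv.Perm.mul_apply, ← pow_add, Nat.add_sub_cancel' hab]
        have h4 := hz _ _ h3
        have h5 := Nat.eq_zero_of_dvd_of_lt h4 (by omega)
        ext; omega
      rcases le_total (a : ℕ) b with hab | hab
      · rw [key a b hab h]
      · rw [key b a hab h.symm]
    · intro x
      exact ⟨(Quotient.mk s x, j x), hj x⟩
  have := Nat.card_congr (Equiv.ofBijective f hf)
  rwa [Nat.card_prod, Nat.card_fin, Nat.card_fin] at this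

lemma semiReg_roots {n : ℕ} (z : Equiv.Perm (Fin n)) (hz : SemiReg z) :
    ∃ q, q * orderOf z = n ∧ ∀ p, Nat.card {τ : Equiv.Perm (Fin n) // τ ^ p = z} ≤
      rootCount p q * orderOf z ^ q := by
  classical
  obtain ⟨Q, _, pr, rep, j, h1, h2, h3, h4⟩ := semiReg_coords z hz
  refine ⟨Nat.card Q, h4, fun p => ?_⟩
  have hcomm : ∀ τ : Equiv.Perm (Fin n), τ ^ p = z → ∀ (k : ℤ) x, τ ((z ^ k) x) = (z ^ k) (τ x) := by
    intro τ hτ k x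
    have : Commute τ (z ^ k) := by
      rw [← hτ]; exact ((Commute.refl τ).pow_right p).zpow_right k
    exact congrArg (fun f : Equiv.Perm (Fin n) => f x) this.eq
  have hsc : ∀ τ : Equiv.Perm (Fin n), τ ^ p = z → ∀ x y, pr x = pr y → pr (τ x) = pr (τ y) := by
    intro τ hτ x y hxy
    obtain ⟨k, hk⟩ := (h3 x y).mp hxy
    exact (h3 _ _).mpr ⟨k, by rw [← hcomm τ hτ, hk]⟩
  have hsc' : ∀ τ : Equiv.Perm (Fin n), τ ^ p = z → ∀ x y, pr x = pr y → pr (τ⁻¹ x) = pr (τ⁻¹ y) := by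
    intro τ hτ x y hxy
    obtain ⟨k, hk⟩ := (h3 x y).mp hxy
    refine (h3 _ _).mpr ⟨k, ?_⟩
    apply τ.injective
    rw [hcomm τ hτ]
    simpa using hk
  let bar : {τ : Equiv.Perm (Fin n) // τ ^ p = z} → Equiv.Perm Q := fun τ =>
    { toFun := fun c => pr (τ.1 (rep c))
      invFun := fun c => pr (τ.1⁻¹ (rep c))
      left_inv := fun c => by
        have := hsc' τ.1 τ.2 (rep (pr (τ.1 (rep c)))) (τ.1 (rep c)) (h1 _)
        exact this.trans (by simp [h1])
      right_inv := fun c => by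
        have := hsc τ.1 τ.2 (rep (pr (τ.1⁻¹ (rep c)))) (τ.1⁻¹ (rep c)) (h1 _)
        exact this.trans (by simp [h1]) }
  have hbar : ∀ τ x, bar τ (pr x) = pr (τ.1 x) := fun τ x => hsc τ.1 τ.2 _ _ (h1 _)
  have hbk : ∀ τ x (k : ℕ), (bar τ ^ k) (pr x) = pr ((τ.1 ^ k) x) := by
    intro τ x k
    induction k with
    | zero => rfl
    | succ k ih => rw [pow_succ', pow_succ', Equiv.Perm.mul_apply, ih, hbar]; rfl
  have hbp : ∀ τ, bar τ ^ p = 1 := by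
    intro τ
    ext c
    rw [← h1 c, hbk, τ.2]
    exact (h3 _ _).mpr (Equiv.Perm.SameCycle.symm ⟨1, by simp⟩)
  let F : {τ : Equiv.Perm (Fin n) // τ ^ p = z} →
      {τ : Equiv.Perm Q // τ ^ p = 1} × (Q → Fin (orderOf z)) :=
    fun τ => (⟨bar τ, hbp τ⟩, fun c => j (τ.1 (rep c)))
  have hF : Function.Injective F := by
    intro τ τ' h
    have ha : bar τ = bar τ' := congrArg (fun u => u.1.1) h
    have hb : ∀ c, j (τ.1 (rep c)) = j (τ'.1 (rep c)) := fun c => congrFun (congrArg (fun u => u.2) h) c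
    have hc : ∀ c, τ.1 (rep c) = τ'.1 (rep c) := by
      intro c
      rw [← h2 (τ.1 (rep c)), ← h2 (τ'.1 (rep c)), hb, ← hbar, ← hbar, ha]
    apply Subtype.ext
    ext1 x
    have e1 := hcomm τ.1 τ.2 (j x) (rep (pr x))
    have e2 := hcomm τ'.1 τ'.2 (j x) (rep (pr x))
    rw [zpow_natCast, h2] at e1 e2
    rw [e1, e2, hc]
  have := Nat.card_le_card_of_injective F hF
  rwa [Nat.card_prod, rootCount_eq, Nat.card_fun, Nat.card_fin] at this

lemma semiReg_count (n d q : ℕ) (hd : 2 ≤ d) (hq : q * d = n) :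
    Nat.card {z : Equiv.Perm (Fin n) // SemiReg z ∧ orderOf z = d} * (d ^ q * q.factorial) ≤
      n.factorial := by
  classical
  have hkey : ∀ z : Equiv.Perm (Fin n), SemiReg z → orderOf z = d →
      z.cycleType = Multiset.replicate q d := by
    intro z hz hzd
    have hall : ∀ a ∈ z.cycleType, a = d := by
      intro a ha
      rw [Equiv.Perm.cycleType_def, Multiset.mem_map] at ha
      obtain ⟨c, hc, rfl⟩ := ha
      have hc' : c ∈ z.cycleFactorsFinset := hc
      rw [Equiv.Perm.mem_cycleFactorsFinset_iff] at hc'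
      obtain ⟨hcyc, hcz⟩ := hc'
      obtain ⟨x, hx⟩ := hcyc.nonempty_support
      have hcx : c = z.cycleOf x := by
        exact Equiv.Perm.cycle_is_cycleOf hx hc
      simp only [Function.comp]
      rw [← hcyc.orderOf]
      apply Nat.dvd_antisymm
      · rw [orderOf_dvd_iff_pow_eq_one, ← hzd]
        apply (hcyc.pow_eq_one_iff' (Equiv.Perm.mem_support.mp hx)).mpr
        rw [hcx, Equiv.Perm.cycleOf_pow_apply_self, pow_orderOf_eq_one]; rfl
      · rw [← hzd]
        apply hz x
        rw [← Equiv.Perm.cycleOf_pow_apply_self, ← hcx, pow_orderOf_eq_one]; rfl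
    have h1 := Multiset.eq_replicate_of_mem hall
    have hs : z.cycleType.sum = n := by
      rw [Equiv.Perm.sum_cycleType]
      have : z.support = Finset.univ := by
        ext x
        simp only [Equiv.Perm.mem_support, Finset.mem_univ, iff_true]
        intro hx
        have := hz x 1 (by simpa using hx)
        rw [hzd] at this
        have := Nat.le_of_dvd one_pos this
        omega
      rw [this]; simp
    rw [h1, Multiset.sum_replicate, smul_eq_mul] at hs
    have : z.cycleType.card = q := Nat.eq_of_mul_eq_mul_right (by omega) (hs.trans hq.symm)
    rw [h1, this]
  have hcount := Equiv.Perm.card_of_cycleType_mul_eq (Fin n) (Multiset.replicate q d)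
  have hle : Nat.card {z : Equiv.Perm (Fin n) // SemiReg z ∧ orderOf z = d} ≤
      (Finset.univ.filter fun z : Equiv.Perm (Fin n) => z.cycleType = Multiset.replicate q d).card := by
    rw [Nat.card_eq_fintype_card, Fintype.card_subtype]
    apply Finset.card_le_card
    intro z hz
    simp only [Finset.mem_filter, Finset.mem_univ, true_and] at hz ⊢
    exact hkey z hz.1 hz.2
  have hprod : (∏ k ∈ (Multiset.replicate q d).toFinset,
      (Multiset.count k (Multiset.replicate q d)).factorial) = q.factorial := by
    rcases Nat.eq_zero_or_pos q with rfl | hq0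
    · simp
    · rw [Multiset.toFinset_replicate, if_neg (by omega)]
      simp
  rw [hprod, Multiset.sum_replicate, smul_eq_mul, Multiset.prod_replicate, Fintype.card_fin, hq,
    Nat.sub_self, Nat.factorial_zero, one_mul] at hcount
  calc _ ≤ _ := Nat.mul_le_mul_right _ hle
    _ = _ := hcount
    _ ≤ _ := by split_ifs <;> simp

lemma trans_semiReg {m n : ℕ} (p : Fin m → ℕ) (σ : Fin m → Equiv.Perm (Fin n)) (z : Equiv.Perm (Fin n))
    (hσ : ∀ i, σ i ^ p i = z) (ht : TupTrans σ) : SemiReg z := by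
  classical
  intro x k hx
  have h := ht (Finset.univ.filter fun y => (z ^ k) y = y) ⟨x, by simpa using hx⟩ (by
    intro i y hy
    simp only [Finset.mem_filter, Finset.mem_univ, true_and] at hy ⊢
    have : Commute (σ i) (z ^ k) := by
      rw [← hσ i]; exact ((Commute.refl _).pow_right _).pow_right k
    have h2 := congrArg (fun f : Equiv.Perm (Fin n) => f y) this.eq
    simp only [Equiv.Perm.mul_apply] at h2
    rw [← h2, hy])
  apply orderOf_dvd_of_pow_eq_one
  ext1 y
  have : y ∈ (Finset.univ.filter fun y => (z ^ k) y = y) := by rw [h]; simp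
  simpa using this

lemma card_central_le (m : ℕ) (p : Fin m → ℕ) (n : ℕ) (hm : 0 < m) :
    Nat.card {σ : Fin m → Equiv.Perm (Fin n) // (∀ i j, σ i ^ p i = σ j ^ p j) ∧ TupTrans σ ∧
      ¬ (∀ i, σ i ^ p i = 1)} ≤
    ∑ d ∈ n.divisors.filter (fun d => 2 ≤ d),
      Nat.card {z : Equiv.Perm (Fin n) // SemiReg z ∧ orderOf z = d} *
        ∏ i, (rootCount (p i) (n / d) * d ^ (n / d)) := by
  classical
  let Z : ℕ → Finset (Equiv.Perm (Fin n)) := fun d =>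
    Finset.univ.filter fun z => SemiReg z ∧ orderOf z = d
  let R : Equiv.Perm (Fin n) → Finset (Fin m → Equiv.Perm (Fin n)) := fun z =>
    Finset.univ.filter fun σ => ∀ i, σ i ^ p i = z
  have hsub : (Finset.univ.filter fun σ : Fin m → Equiv.Perm (Fin n) =>
      (∀ i j, σ i ^ p i = σ j ^ p j) ∧ TupTrans σ ∧ ¬ (∀ i, σ i ^ p i = 1)) ⊆
      (n.divisors.filter (fun d => 2 ≤ d)).biUnion fun d => (Z d).biUnion R := by
    intro σ hσ
    simp only [Finset.mem_filter, Finset.mem_univ, true_and] at hσ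
    obtain ⟨h1, h2, h3⟩ := hσ
    let z := σ ⟨0, hm⟩ ^ p ⟨0, hm⟩
    have hz : ∀ i, σ i ^ p i = z := fun i => h1 i _
    have hz1 : z ≠ 1 := fun h => h3 fun i => (hz i).trans h
    have hsr := trans_semiReg p σ z hz h2
    obtain ⟨q, hq, _⟩ := semiReg_roots z hsr
    have hn0 : n ≠ 0 := by
      rintro rfl
      exact hz1 (Subsingleton.elim _ _)
    have ho : 2 ≤ orderOf z := by
      have := orderOf_pos z
      have : orderOf z ≠ 1 := fun h => hz1 (orderOf_eq_one_iff.mp h)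
      omega
    simp only [Finset.mem_biUnion, Finset.mem_filter, Nat.mem_divisors, Z, R, Finset.mem_univ, true_and]
    exact ⟨orderOf z, ⟨⟨⟨q, by rw [mul_comm]; exact hq.symm⟩, hn0⟩, ho⟩, z, ⟨hsr, rfl⟩, hz⟩
  rw [Nat.card_eq_fintype_card, Fintype.card_subtype]
  refine (Finset.card_le_card hsub).trans (Finset.card_biUnion_le.trans ?_)
  refine Finset.sum_le_sum fun d hd => ?_
  have hZ : Nat.card {z : Equiv.Perm (Fin n) // SemiReg z ∧ orderOf z = d} = (Z d).card := by
    rw [Nat.card_eq_fintype_card, Fintype.card_subtype]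
  rw [hZ]
  refine Finset.card_biUnion_le_card_mul _ _ _ fun z hz => ?_
  simp only [Finset.mem_filter, Finset.mem_univ, true_and, Z] at hz
  obtain ⟨q, hq, hroot⟩ := semiReg_roots z hz.1
  have hd0 : 0 < d := by have := (Finset.mem_filter.mp hd).2; omega
  have hqd : n / d = q := by
    rw [← hq, hz.2]; exact Nat.mul_div_cancel _ hd0
  have hR : (R z).card = ∏ i, Nat.card {τ : Equiv.Perm (Fin n) // τ ^ p i = z} := by
    rw [← card_pi_subtype (fun i τ => τ ^ p i = z), Nat.card_eq_fintype_card, Fintype.card_subtype]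
  rw [hR, hqd]
  refine Finset.prod_le_prod' fun i _ => ?_
  have := hroot (p i)
  rwa [hz.2] at this

lemma prod_rootCount_le (m : ℕ) (p : Fin m → ℕ) (hp : ∀ i, 2 ≤ p i) (q : ℕ) :
    (∏ i, (rootCount (p i) q : ℝ)) ≤
      (q.factorial : ℝ) ^ ((m : ℝ) - ∑ i, (1 : ℝ) / (p i : ℝ)) * (∏ i, (1 + (p i : ℝ))) ^ q := by
  have hf : (0 : ℝ) < q.factorial := by exact_mod_cast q.factorial_pos
  have h1 : (q.factorial : ℝ) ^ ((m : ℝ) - ∑ i, (1 : ℝ) / (p i : ℝ)) =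
      ∏ i, ((q.factorial : ℝ) * ((q.factorial : ℝ) ^ ((1 : ℝ) / (p i : ℝ)))⁻¹) := by
    rw [Finset.prod_mul_distrib, Finset.prod_const, Finset.card_univ, Fintype.card_fin,
      Finset.prod_inv_distrib, ← Real.rpow_sum_of_pos hf, Real.rpow_sub hf, Real.rpow_natCast,
      div_eq_mul_inv]
  rw [h1, ← Finset.prod_pow, ← Finset.prod_mul_distrib]
  refine Finset.prod_le_prod (fun i _ => by positivity) fun i _ => ?_
  rw [rootCount_eq_norm]
  have h2 := (rootNorm_le_ctrl (p i) q (by have := hp i; omega)).trans (ctrl_le_pow (p i) q)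
  exact mul_le_mul_of_nonneg_left h2 (by positivity)

lemma le_tupCount (m : ℕ) (p : Fin m → ℕ) (hp : ∀ i, 2 ≤ p i) (n : ℕ) :
    (n.factorial : ℝ) ^ ((m : ℝ) - ∑ i, (1 : ℝ) / (p i : ℝ)) ≤
      (∏ i, (1 + (p i : ℝ))) ^ n * tupCount m p n := by
  have hf : (0 : ℝ) < n.factorial := by exact_mod_cast n.factorial_pos
  have h1 : (n.factorial : ℝ) ^ ((m : ℝ) - ∑ i, (1 : ℝ) / (p i : ℝ)) =
      ∏ i, ((n.factorial : ℝ) * ((n.factorial : ℝ) ^ ((1 : ℝ) / (p i : ℝ)))⁻¹) := by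
    rw [Finset.prod_mul_distrib, Finset.prod_const, Finset.card_univ, Fintype.card_fin,
      Finset.prod_inv_distrib, ← Real.rpow_sum_of_pos hf, Real.rpow_sub hf, Real.rpow_natCast,
      div_eq_mul_inv]
  unfold tupCount
  rw [h1, ← Finset.prod_pow, Nat.cast_prod, ← Finset.prod_mul_distrib]
  refine Finset.prod_le_prod (fun i _ => by positivity) fun i _ => ?_
  rw [rootCount_eq_norm]
  have h2 := rootNorm_ge (p i) n (by have := hp i; omega)
  have h3 : 1 ≤ (1 + (p i : ℝ)) ^ n * rootNorm (p i) n :=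
    h2.trans (mul_le_mul_of_nonneg_right (ctrl_le_pow (p i) n) (rootNorm_pos _ _).le)
  have h4 : (0 : ℝ) ≤ (n.factorial : ℝ) * ((n.factorial : ℝ) ^ ((1 : ℝ) / (p i : ℝ)))⁻¹ := by positivity
  calc _ = ((n.factorial : ℝ) * ((n.factorial : ℝ) ^ ((1 : ℝ) / (p i : ℝ)))⁻¹) * 1 := by ring
    _ ≤ _ := mul_le_mul_of_nonneg_left h3 h4
    _ = _ := by ring

lemma pow_div_half_factorial_tendsto (K δ : ℝ) (hK : 1 ≤ K) (hδ : 0 < δ) :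
    Tendsto (fun n : ℕ => K ^ n * (((n / 2).factorial : ℝ) ^ δ)⁻¹) atTop (𝓝 0) := by
  have h0 : Tendsto (fun k : ℕ => ((K ^ (2 / δ)) ^ k / (k.factorial : ℝ)) ^ δ) atTop (𝓝 0) := by
    have h1 := (FloorSemiring.tendsto_pow_div_factorial_atTop (K ^ (2 / δ))).rpow_const
      (p := δ) (Or.inr hδ.le)
    rwa [Real.zero_rpow hδ.ne'] at h1
  have hdiv : Tendsto (fun n : ℕ => n / 2) atTop atTop := Nat.tendsto_div_const_atTop (by norm_num)
  have h2 := (h0.comp hdiv).const_mul K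
  rw [mul_zero] at h2
  refine squeeze_zero (fun n => by positivity) (fun n => ?_) h2
  simp only [Function.comp]
  have hK0 : 0 < K := by linarith
  have e1 : ((K ^ (2 / δ)) ^ (n / 2) / ((n / 2).factorial : ℝ)) ^ δ =
      K ^ (2 * (n / 2)) * (((n / 2).factorial : ℝ) ^ δ)⁻¹ := by
    rw [Real.div_rpow (by positivity) (by positivity), div_eq_mul_inv]
    congr 1
    rw [← Real.rpow_natCast, ← Real.rpow_mul hK0.le, ← Real.rpow_mul hK0.le, ← Real.rpow_natCast]
    congr 1
    push_cast
    field_simp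
  rw [e1, ← mul_assoc]
  refine mul_le_mul_of_nonneg_right ?_ (by positivity)
  rw [← pow_succ']
  exact pow_le_pow_right₀ hK (by omega)

lemma central_tendsto (m : ℕ) (p : Fin m → ℕ) (hp : ∀ i, 2 ≤ p i)
    (h : ∑ i, (1 : ℝ) / (p i : ℝ) < (m : ℝ) - 1) :
    Tendsto (fun n : ℕ =>
      (Nat.card {σ : Fin m → Equiv.Perm (Fin n) // (∀ i j, σ i ^ p i = σ j ^ p j) ∧ TupTrans σ ∧
        ¬ (∀ i, σ i ^ p i = 1)} : ℝ) / tupCount m p n) atTop (𝓝 0) := by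
  set δ : ℝ := (m : ℝ) - 1 - ∑ i, (1 : ℝ) / (p i : ℝ) with hδ
  have hδ0 : 0 < δ := by linarith
  have hm : 0 < (m : ℝ) := by
    have : 0 ≤ ∑ i, (1 : ℝ) / (p i : ℝ) := Finset.sum_nonneg fun i _ => by positivity
    linarith
  have hm0 : 0 < m := by exact_mod_cast hm
  have hexp : (m : ℝ) - ∑ i, (1 : ℝ) / (p i : ℝ) = 1 + δ := by rw [hδ]; ring
  set D : ℝ := ∏ i, (1 + (p i : ℝ)) with hD
  have hD1 : 1 ≤ D := by
    have h9 : ∏ i : Fin m, (1 : ℝ) ≤ ∏ i, (1 + (p i : ℝ)) :=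
      Finset.prod_le_prod (fun _ _ => zero_le_one) fun i _ => by simp
    rwa [Finset.prod_const_one] at h9
  have hD0 : 0 < D := by linarith
  have hlim := pow_div_half_factorial_tendsto (2 * (D * D * 2 ^ m)) δ (by
    have : (1 : ℝ) ≤ 2 ^ m := one_le_pow₀ (by norm_num)
    nlinarith [one_le_mul_of_one_le_of_one_le (one_le_mul_of_one_le_of_one_le hD1 hD1) this]) hδ0
  refine squeeze_zero (fun n => by positivity) (fun n => ?_) hlim
  have hT : (0 : ℝ) < tupCount m p n := by exact_mod_cast tupCount_pos m p n
  rw [div_le_iff₀ hT]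
  have h1 := card_central_le m p n hm0
  refine (Nat.cast_le.mpr h1).trans ?_
  rw [Nat.cast_sum]
  have hnf : (0 : ℝ) < n.factorial := by exact_mod_cast n.factorial_pos
  have hterm : ∀ d ∈ n.divisors.filter (fun d => 2 ≤ d),
      ((Nat.card {z : Equiv.Perm (Fin n) // SemiReg z ∧ orderOf z = d} *
        ∏ i, (rootCount (p i) (n / d) * d ^ (n / d)) : ℕ) : ℝ) ≤
      (D * D * 2 ^ m) ^ n * (((n / 2).factorial : ℝ) ^ δ)⁻¹ * tupCount m p n := by
    intro d hd
    obtain ⟨hdn, hd2⟩ := Finset.mem_filter.mp hd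
    obtain ⟨hdvd, hn0⟩ := Nat.mem_divisors.mp hdn
    set q := n / d with hq
    have hqd : q * d = n := Nat.div_mul_cancel hdvd
    have hqn : 2 * q ≤ n := by rw [← hqd]; nlinarith
    have hqf : (0 : ℝ) < q.factorial := by exact_mod_cast q.factorial_pos
    have hh : (0 : ℝ) < (n/2).factorial := by exact_mod_cast (n/2).factorial_pos
    have hc : (Nat.card {z : Equiv.Perm (Fin n) // SemiReg z ∧ orderOf z = d} : ℝ) * q.factorial ≤
        n.factorial := by
      have h3 := semiReg_count n d q hd2 hqd
      have h4 : Nat.card {z : Equiv.Perm (Fin n) // SemiReg z ∧ orderOf z = d} * q.factorial ≤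
          n.factorial := by
        refine le_trans ?_ h3
        apply Nat.mul_le_mul_left
        exact Nat.le_mul_of_pos_left _ (by positivity)
      exact_mod_cast h4
    have hroots := prod_rootCount_le m p hp q
    rw [hexp, ← hD, Real.rpow_add hqf, Real.rpow_one] at hroots
    have htup := le_tupCount m p hp n
    rw [hexp, ← hD, Real.rpow_add hnf, Real.rpow_one] at htup
    have hdq : (d : ℝ) ^ q ≤ 2 ^ n := by
      have : d ^ q ≤ 2 ^ n := by
        rw [← hqd, mul_comm, pow_mul]
        exact Nat.pow_le_pow_left Nat.lt_two_pow_self.le _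
      exact_mod_cast this
    have hfac : (q.factorial : ℝ) * (n/2).factorial ≤ n.factorial := by
      have h5 : q.factorial * (n - q).factorial ≤ n.factorial :=
        Nat.le_of_dvd n.factorial_pos (Nat.factorial_mul_factorial_dvd_factorial (by omega))
      have h6 : (n/2).factorial ≤ (n - q).factorial := Nat.factorial_le (by omega)
      exact_mod_cast (Nat.mul_le_mul_left _ h6).trans h5
    have hfacδ : (q.factorial : ℝ) ^ δ ≤ (n.factorial : ℝ) ^ δ * (((n / 2).factorial : ℝ) ^ δ)⁻¹ := by
      rw [← div_eq_mul_inv, le_div_iff₀ (by positivity), ← Real.mul_rpow hqf.le hh.le]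
      exact Real.rpow_le_rpow (by positivity) hfac hδ0.le
    push_cast
    rw [Finset.prod_mul_distrib, Finset.prod_const, Finset.card_univ, Fintype.card_fin]
    set Nz : ℝ := (Nat.card {z : Equiv.Perm (Fin n) // SemiReg z ∧ orderOf z = d} : ℝ) with hNz
    have hNz0 : 0 ≤ Nz := by positivity
    calc Nz * ((∏ i, (rootCount (p i) q : ℝ)) * ((d : ℝ) ^ q) ^ m)
        ≤ Nz * ((q.factorial * (q.factorial : ℝ) ^ δ * D ^ q) * ((2 : ℝ) ^ n) ^ m) := by
          gcongr
      _ = (Nz * q.factorial) * (q.factorial : ℝ) ^ δ * D ^ q * ((2 : ℝ) ^ n) ^ m := by ring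
      _ ≤ n.factorial * ((n.factorial : ℝ) ^ δ * (((n / 2).factorial : ℝ) ^ δ)⁻¹) * D ^ n *
          ((2 : ℝ) ^ n) ^ m := by
          gcongr
          omega
      _ = (n.factorial * (n.factorial : ℝ) ^ δ) * ((((n / 2).factorial : ℝ) ^ δ)⁻¹ * D ^ n *
          ((2 : ℝ) ^ n) ^ m) := by ring
      _ ≤ (D ^ n * tupCount m p n) * ((((n / 2).factorial : ℝ) ^ δ)⁻¹ * D ^ n *
          ((2 : ℝ) ^ n) ^ m) := by
          gcongr
      _ = _ := by
          rw [← pow_mul, mul_comm n m, pow_mul, mul_pow, mul_pow]; ring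
  refine (Finset.sum_le_card_nsmul _ _ _ hterm).trans ?_
  rw [nsmul_eq_mul]
  have hcard : (((n.divisors.filter (fun d => 2 ≤ d)).card : ℕ) : ℝ) ≤ 2 ^ n := by
    have h7 : (n.divisors.filter (fun d => 2 ≤ d)).card ≤ 2 ^ n :=
      (Finset.card_filter_le _ _).trans ((Nat.card_divisors_le_self n).trans Nat.lt_two_pow_self.le)
    exact_mod_cast h7
  refine (mul_le_mul_of_nonneg_right hcard (by positivity)).trans (le_of_eq ?_)
  rw [mul_pow 2 (D * D * 2 ^ m)]; ring

/-- a permutation representation is transitive -/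
def HomTrans {G : Type*} [Group G] {n : ℕ} (o : Fin n) (ρ : G →* Equiv.Perm (Fin n)) : Prop :=
  ∀ x, ∃ g, ρ g o = x

/-- coset action transported along a bijection -/
def cosetHom {G : Type*} [Group G] {n : ℕ} (H : Subgroup G) (e : (G ⧸ H) ≃ Fin n) :
    G →* Equiv.Perm (Fin n) where
  toFun g := (e.symm.trans (MulAction.toPerm g)).trans e
  map_one' := by ext x; simp
  map_mul' g h := by ext x; simp [mul_smul]

lemma cosetHom_apply {G : Type*} [Group G] {n : ℕ} (H : Subgroup G) (e : (G ⧸ H) ≃ Fin n)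
    (g : G) (x : Fin n) : cosetHom H e g x = e (g • e.symm x) := rfl

lemma fixedCosetCount_eq {G : Type*} [Group G] {n : ℕ} (H : Subgroup G) (e : (G ⧸ H) ≃ Fin n)
    (g : G) : fixedCosetCount g H = Nat.card {x : Fin n // cosetHom H e g x = x} := by
  refine Nat.card_congr (e.subtypeEquiv fun x => ?_)
  rw [cosetHom_apply, Equiv.symm_apply_apply, e.apply_eq_iff_eq]

lemma cosetHom_base {G : Type*} [Group G] {n : ℕ} (o : Fin n) (H : Subgroup G) (e : (G ⧸ H) ≃ Fin n)
    (he : e ((1 : G) : G ⧸ H) = o) (g : G) : cosetHom H e g o = e (g : G ⧸ H) := by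
  rw [cosetHom_apply, ← he, Equiv.symm_apply_apply, MulAction.Quotient.smul_coe, smul_eq_mul, mul_one]

lemma exists_base_equiv {G : Type*} [Group G] {n : ℕ} (o : Fin n) (H : Subgroup G)
    (hH : H.index = n) : ∃ e : (G ⧸ H) ≃ Fin n, e ((1 : G) : G ⧸ H) = o := by
  have hn : 0 < n := o.pos
  have hc : Nat.card (G ⧸ H) = n := hH
  have : Finite (G ⧸ H) := Nat.finite_of_card_ne_zero (by omega)
  let e0 : (G ⧸ H) ≃ Fin n := Finite.equivFinOfCardEq hc
  exact ⟨e0.trans (Equiv.swap (e0 ((1 : G) : G ⧸ H)) o), by simp⟩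

lemma exists_param {G : Type*} [Group G] {n : ℕ} (o : Fin n) :
    ∃ Ψ : ({H : Subgroup G // H.index = n} × {τ : Equiv.Perm (Fin n) // τ o = o}) ≃
      {ρ : G →* Equiv.Perm (Fin n) // HomTrans o ρ}, ∀ y g,
        fixedCosetCount g y.1.1 = Nat.card {x : Fin n // (Ψ y).1 g x = x} := by
  classical
  choose e he using fun H : {H : Subgroup G // H.index = n} => exists_base_equiv o H.1 H.2
  let E : ∀ y : {H : Subgroup G // H.index = n} × {τ : Equiv.Perm (Fin n) // τ o = o},
    (G ⧸ y.1.1) ≃ Fin n := fun y => (e y.1).trans y.2.1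
  have hE : ∀ y, E y ((1 : G) : G ⧸ y.1.1) = o := fun y => by
    simp only [E, Equiv.trans_apply, he, y.2.2]
  let F : ({H : Subgroup G // H.index = n} × {τ : Equiv.Perm (Fin n) // τ o = o}) →
      {ρ : G →* Equiv.Perm (Fin n) // HomTrans o ρ} := fun y =>
    ⟨cosetHom y.1.1 (E y), fun x => by
      obtain ⟨g, hg⟩ := QuotientGroup.mk_surjective ((E y).symm x)
      exact ⟨g, by rw [cosetHom_base o _ _ (hE y), hg, Equiv.apply_symm_apply]⟩⟩
  have hstab : ∀ y g, (F y).1 g o = o ↔ g ∈ y.1.1 := by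
    intro y g
    simp only [F]
    have h0 : E y (g : G ⧸ y.1.1) = o ↔ E y (g : G ⧸ y.1.1) = E y ((1 : G) : G ⧸ y.1.1) :=
      ⟨fun h => h.trans (hE y).symm, fun h => h.trans (hE y)⟩
    rw [cosetHom_base o _ _ (hE y), h0, (E y).apply_eq_iff_eq, eq_comm, QuotientGroup.eq]
    simp
  have hF : Function.Bijective F := by
    constructor
    · rintro ⟨H, τ⟩ ⟨H', τ'⟩ h
      have hH : H = H' := by
        apply Subtype.ext
        ext g
        rw [← hstab (H, τ) g, ← hstab (H', τ') g, h]
      subst hH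
      congr 1
      apply Subtype.ext
      ext1 x
      obtain ⟨g, hg⟩ := QuotientGroup.mk_surjective ((e H).symm x)
      have h1 : (F (H, τ)).1 g o = (F (H, τ')).1 g o := by rw [h]
      simp only [F] at h1
      rw [cosetHom_base o _ _ (hE (H, τ)), cosetHom_base o _ _ (hE (H, τ'))] at h1
      simpa only [E, Equiv.trans_apply, hg, Equiv.apply_symm_apply] using h1
    · rintro ⟨ρ, hρ⟩
      let H : Subgroup G :=
        { carrier := {g | ρ g o = o}
          one_mem' := by simp
          mul_mem' := fun {a b} ha hb => by
            simp only [Set.mem_ofPred_eq] at ha hb ⊢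
            rw [map_mul, Equiv.Perm.mul_apply, hb, ha]
          inv_mem' := fun {a} ha => by
            simp only [Set.mem_ofPred_eq] at ha ⊢
            rw [map_inv, Equiv.Perm.inv_eq_iff_eq, ha] }
      have hmem : ∀ g, g ∈ H ↔ ρ g o = o := fun g => Iff.rfl
      have hrel : ∀ a b : G, ((a : G ⧸ H) = b) ↔ ρ a o = ρ b o := by
        intro a b
        rw [QuotientGroup.eq, hmem, map_mul, Equiv.Perm.mul_apply, map_inv, Equiv.Perm.inv_eq_iff_eq]
        exact eq_comm
      let u0 : G ⧸ H → Fin n := fun c => ρ c.out o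
      have hu0 : ∀ g : G, u0 (g : G ⧸ H) = ρ g o := fun g => by
        simp only [u0]
        rw [← hrel]; simp
      have hu : Function.Bijective u0 := by
        constructor
        · intro c c' h
          obtain ⟨a, rfl⟩ := QuotientGroup.mk_surjective c
          obtain ⟨b, rfl⟩ := QuotientGroup.mk_surjective c'
          rw [hu0, hu0] at h
          exact (hrel _ _).mpr h
        · intro x
          obtain ⟨g, hg⟩ := hρ x
          exact ⟨(g : G ⧸ H), by rw [hu0, hg]⟩
      let u : (G ⧸ H) ≃ Fin n := Equiv.ofBijective u0 hu
      have hidx : H.index = n := by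
        have := Nat.card_congr u
        rw [Nat.card_fin] at this
        exact this
      have hu1 : u ((1 : G) : G ⧸ H) = o := by
        change u0 _ = o
        rw [hu0, map_one]; rfl
      refine ⟨(⟨H, hidx⟩, ⟨(e ⟨H, hidx⟩).symm.trans u, ?_⟩), ?_⟩
      · have := he ⟨H, hidx⟩
        rw [Equiv.trans_apply, ← hu1]
        congr 1
        rw [Equiv.symm_apply_eq, this]
        exact hu1
      · apply Subtype.ext
        ext1 g
        ext1 x
        obtain ⟨a, rfl⟩ := hρ x
        have hEu : E (⟨H, hidx⟩, ⟨(e ⟨H, hidx⟩).symm.trans u, by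
            have := he ⟨H, hidx⟩
            rw [Equiv.trans_apply, ← hu1]
            congr 1
            rw [Equiv.symm_apply_eq, this]
            exact hu1⟩) = u := by
          ext1 c
          simp [E]
        simp only [F]
        rw [hEu, cosetHom_apply]
        have h2 : u.symm (ρ a o) = (a : G ⧸ H) := by
          rw [Equiv.symm_apply_eq]; exact (hu0 a).symm
        rw [h2, MulAction.Quotient.smul_coe, smul_eq_mul]
        change u0 _ = _
        rw [hu0, map_mul, Equiv.Perm.mul_apply]
  exact ⟨Equiv.ofBijective F hF, fun y g => fixedCosetCount_eq _ _ _⟩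

lemma subgroupExp_eq {G : Type*} [Group G] {n : ℕ} (o : Fin n) [Finite (G →* Equiv.Perm (Fin n))]
    (g : G) : subgroupExp G n (fun H => (fixedCosetCount g H : ℝ)) =
      (Nat.card {y : (G →* Equiv.Perm (Fin n)) × Fin n // HomTrans o y.1 ∧ y.1 g y.2 = y.2} : ℝ) /
        Nat.card {ρ : G →* Equiv.Perm (Fin n) // HomTrans o ρ} := by
  classical
  obtain ⟨Ψ, hΨ⟩ := exists_param (G := G) o
  have hK : Nonempty {τ : Equiv.Perm (Fin n) // τ o = o} := ⟨⟨1, rfl⟩⟩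
  have hfin : Finite ({H : Subgroup G // H.index = n} × {τ : Equiv.Perm (Fin n) // τ o = o}) :=
    Finite.of_equiv _ Ψ.symm
  have hfinH : Finite {H : Subgroup G // H.index = n} := Finite.prod_left {τ : Equiv.Perm (Fin n) // τ o = o}
  let _ := Fintype.ofFinite {H : Subgroup G // H.index = n}
  let _ := Fintype.ofFinite {ρ : G →* Equiv.Perm (Fin n) // HomTrans o ρ}
  set K := Nat.card {τ : Equiv.Perm (Fin n) // τ o = o} with hKdef
  have hK0 : (K : ℝ) ≠ 0 := by
    have : 0 < K := Nat.card_pos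
    exact_mod_cast this.ne'
  have h1 : Nat.card {ρ : G →* Equiv.Perm (Fin n) // HomTrans o ρ} =
      Nat.card {H : Subgroup G // H.index = n} * K := by
    rw [← Nat.card_congr Ψ, Nat.card_prod]
  have h2 : Nat.card {y : (G →* Equiv.Perm (Fin n)) × Fin n // HomTrans o y.1 ∧ y.1 g y.2 = y.2} =
      ∑ ρ : {ρ : G →* Equiv.Perm (Fin n) // HomTrans o ρ}, Nat.card {x : Fin n // ρ.1 g x = x} := by
    rw [← Nat.card_sigma]
    refine Nat.card_congr
      { toFun := fun y => ⟨⟨y.1.1, y.2.1⟩, ⟨y.1.2, y.2.2⟩⟩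
        invFun := fun s => ⟨(s.1.1, s.2.1), s.1.2, s.2.2⟩
        left_inv := fun _ => rfl
        right_inv := fun _ => rfl }
  have h3 : ∑ ρ : {ρ : G →* Equiv.Perm (Fin n) // HomTrans o ρ}, Nat.card {x : Fin n // ρ.1 g x = x} =
      (∑ H : {H : Subgroup G // H.index = n}, fixedCosetCount g H.1) * K := by
    rw [← Equiv.sum_comp Ψ, Fintype.sum_prod_type, Finset.sum_mul]
    refine Finset.sum_congr rfl fun H _ => ?_
    have : ∀ τ : {τ : Equiv.Perm (Fin n) // τ o = o},
        Nat.card {x : Fin n // (Ψ (H, τ)).1 g x = x} = fixedCosetCount g H.1 :=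
      fun τ => (hΨ (H, τ) g).symm
    simp only [this]
    rw [Finset.sum_const, Finset.card_univ, ← Nat.card_eq_fintype_card, smul_eq_mul, mul_comm]
  unfold subgroupExp
  rw [h2, h3, h1, tsum_fintype]
  push_cast
  rw [mul_div_mul_right _ _ hK0]

/-- the images of the generators -/
def genTup {m : ℕ} {p : Fin m → ℕ} {n : ℕ} (ρ : TorusKnotGroup m p →* Equiv.Perm (Fin n)) :
    Fin m → Equiv.Perm (Fin n) := fun i => ρ (PresentedGroup.of i)

lemma torus_gen_pow (m : ℕ) (p : Fin m → ℕ) (i j : Fin m) :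
    (PresentedGroup.of (rels := torusRels m p) i) ^ p i = (PresentedGroup.of j) ^ p j := by
  have : PresentedGroup.mk (torusRels m p) (FreeGroup.of i ^ p i * (FreeGroup.of j ^ p j)⁻¹) = 1 := by
    apply (QuotientGroup.eq_one_iff _).mpr
    exact Subgroup.subset_normalClosure ⟨i, j, rfl⟩
  rw [map_mul, map_inv, map_pow, map_pow, mul_inv_eq_one] at this
  exact this

lemma genTup_common {m : ℕ} {p : Fin m → ℕ} {n : ℕ} (ρ : TorusKnotGroup m p →* Equiv.Perm (Fin n)) :
    ∀ i j, genTup ρ i ^ p i = genTup ρ j ^ p j := by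
  intro i j
  simp only [genTup]
  rw [← map_pow, ← map_pow, torus_gen_pow m p i j]

lemma genTup_injective {m : ℕ} {p : Fin m → ℕ} {n : ℕ} :
    Function.Injective (genTup : (TorusKnotGroup m p →* Equiv.Perm (Fin n)) → _) := by
  intro ρ ρ' h
  exact PresentedGroup.ext fun i => congrFun h i

lemma genTup_surj {m : ℕ} {p : Fin m → ℕ} {n : ℕ} (σ : Fin m → Equiv.Perm (Fin n))
    (hσ : ∀ i j, σ i ^ p i = σ j ^ p j) :
    ∃ ρ : TorusKnotGroup m p →* Equiv.Perm (Fin n), genTup ρ = σ := by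
  refine ⟨PresentedGroup.toGroup (f := σ) ?_, ?_⟩
  · rintro w ⟨i, j, rfl⟩
    simp only [map_mul, map_pow, map_inv, FreeGroup.lift_apply_of]
    rw [hσ i j, mul_inv_cancel]
  · funext i
    exact PresentedGroup.toGroup.of _

lemma finite_homs (m : ℕ) (p : Fin m → ℕ) (n : ℕ) :
    Finite (TorusKnotGroup m p →* Equiv.Perm (Fin n)) :=
  Finite.of_injective _ genTup_injective

lemma card_homs {m : ℕ} {p : Fin m → ℕ} {n : ℕ} (P : (Fin m → Equiv.Perm (Fin n)) → Prop) :
    Nat.card {ρ : TorusKnotGroup m p →* Equiv.Perm (Fin n) // P (genTup ρ)} =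
      Nat.card {σ : Fin m → Equiv.Perm (Fin n) // (∀ i j, σ i ^ p i = σ j ^ p j) ∧ P σ} := by
  refine Nat.card_congr (Equiv.ofBijective
    (fun ρ => ⟨genTup ρ.1, genTup_common ρ.1, ρ.2⟩) ⟨?_, ?_⟩)
  · intro ρ ρ' h
    exact Subtype.ext (genTup_injective (congrArg Subtype.val h))
  · rintro ⟨σ, h1, h2⟩
    obtain ⟨ρ, rfl⟩ := genTup_surj σ h1
    exact ⟨⟨ρ, h2⟩, rfl⟩

lemma homTrans_iff {m : ℕ} {p : Fin m → ℕ} {n : ℕ} (o : Fin n)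
    (ρ : TorusKnotGroup m p →* Equiv.Perm (Fin n)) : HomTrans o ρ ↔ TupTrans (genTup ρ) := by
  classical
  constructor
  · intro h S hS hinv
    have key : ∀ g, ∀ x ∈ S, ρ g x ∈ S := by
      intro g
      induction g using PresentedGroup.induction_on with
      | _ w =>
        induction w using FreeGroup.induction_on with
        | C1 => intro x hx; simpa using hx
        | of i => exact hinv i
        | inv_of i _ =>
          intro x hx
          by_contra hcon
          have h1 := perm_inv_compl (genTup ρ i) S (hinv i) _ (Finset.mem_compl.mpr hcon)
          rw [Finset.mem_compl] at h1
          apply h1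
          rw [map_inv, map_inv]
          have : genTup ρ i = ρ (PresentedGroup.mk (torusRels m p) (FreeGroup.of i)) := rfl
          rw [this, ← Equiv.Perm.mul_apply, mul_inv_cancel]
          exact hx
        | mul a b ha hb =>
          intro x hx
          rw [map_mul, map_mul, Equiv.Perm.mul_apply]
          exact ha _ (hb _ hx)
    obtain ⟨x, hx⟩ := hS
    ext y
    simp only [Finset.mem_univ, iff_true]
    obtain ⟨a, rfl⟩ := h x
    obtain ⟨b, rfl⟩ := h y
    have := key (b * a⁻¹) _ hx
    rwa [map_mul, map_inv, ← Equiv.Perm.mul_apply, inv_mul_cancel_right] at this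
  · intro h x
    have h1 := h (Finset.univ.filter fun x => ∃ g, ρ g o = x) ⟨o, by
        simp only [Finset.mem_filter, Finset.mem_univ, true_and]; exact ⟨1, by simp⟩⟩ (by
      intro i y hy
      simp only [Finset.mem_filter, Finset.mem_univ, true_and] at hy ⊢
      obtain ⟨g, rfl⟩ := hy
      exact ⟨PresentedGroup.of i * g, by rw [map_mul]; rfl⟩)
    have h2 : x ∈ (Finset.univ.filter fun x => ∃ g, ρ g o = x) := by rw [h1]; simp
    simpa using h2

/-- value of a word, the head of the list acting first -/
def wordVal {m : ℕ} {G : Type*} [Group G] (f : Fin m → G) (l : List (Fin m × ℕ)) : G :=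
  ((l.map fun s => f s.1 ^ s.2).reverse).prod

lemma wordVal_append {m : ℕ} {G : Type*} [Group G] (f : Fin m → G) (l l' : List (Fin m × ℕ)) :
    wordVal f (l ++ l') = wordVal f l' * wordVal f l := by
  simp [wordVal]

lemma wordVal_single {m : ℕ} {G : Type*} [Group G] (f : Fin m → G) (s : Fin m × ℕ) :
    wordVal f [s] = f s.1 ^ s.2 := by
  simp [wordVal]

lemma wordVal_nil {m : ℕ} {G : Type*} [Group G] (f : Fin m → G) : wordVal f [] = 1 := by
  simp [wordVal]

lemma wordVal_map {m : ℕ} {G G' : Type*} [Group G] [Group G'] (φ : G →* G') (f : Fin m → G)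
    (l : List (Fin m × ℕ)) : φ (wordVal f l) = wordVal (fun i => φ (f i)) l := by
  induction l with
  | nil => simp [wordVal]
  | cons s l ih =>
    rw [← List.singleton_append, wordVal_append, wordVal_append, map_mul, ih, wordVal_single,
      wordVal_single, map_pow]

lemma exists_word {m : ℕ} (p : Fin m → ℕ) (hp : ∀ i, 2 ≤ p i) (c : CyclicFreeProduct m p) :
    ∃ l, wordVal (fun i => PresentedGroup.of (rels := cyclicRels m p) i) l = c := by
  induction c using PresentedGroup.induction_on with
  | _ w =>
    induction w using FreeGroup.induction_on with
    | C1 => exact ⟨[], by rw [wordVal_nil, map_one]⟩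
    | of i => exact ⟨[(i, 1)], by rw [wordVal_single, pow_one]; rfl⟩
    | inv_of i _ =>
      refine ⟨[(i, p i - 1)], ?_⟩
      rw [wordVal_single, map_inv]
      apply eq_inv_of_mul_eq_one_left
      change (PresentedGroup.of (rels := cyclicRels m p) i) ^ (p i - 1) * PresentedGroup.of i = 1
      rw [← pow_succ, Nat.sub_add_cancel (by have := hp i; omega), cyclicFreeProduct_gen_pow]
    | mul a b ha hb =>
      obtain ⟨l, hl⟩ := ha
      obtain ⟨l', hl'⟩ := hb
      exact ⟨l' ++ l, by rw [wordVal_append, hl, hl', map_mul]⟩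

lemma exists_reduced {m : ℕ} (p : Fin m → ℕ) (hp : ∀ i, 2 ≤ p i) (c : CyclicFreeProduct m p) :
    ∃ l : List (Fin m × ℕ), wordVal (fun i => PresentedGroup.of (rels := cyclicRels m p) i) l = c ∧
      (∀ l1 s l2, l = l1 ++ s :: l2 → ¬ p s.1 ∣ s.2) ∧
      (∀ l1 s t l2, l = l1 ++ s :: t :: l2 → s.1 ≠ t.1) := by
  classical
  set V := wordVal (fun i => PresentedGroup.of (rels := cyclicRels m p) i) with hV
  have hex : ∃ k, ∃ l : List (Fin m × ℕ), V l = c ∧ l.length = k := by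
    obtain ⟨l, hl⟩ := exists_word p hp c
    exact ⟨_, l, hl, rfl⟩
  obtain ⟨l, hl, hlen⟩ := Nat.find_spec hex
  have hmin : ∀ l', V l' = c → l.length ≤ l'.length := by
    intro l' hl'
    rw [hlen]
    exact Nat.find_min' hex ⟨l', hl', rfl⟩
  have happ : ∀ a b, V (a ++ b) = V b * V a := fun a b => wordVal_append _ a b
  have hcons : ∀ s b, V (s :: b) = V b * (PresentedGroup.of s.1) ^ s.2 := fun s b => by
    rw [← List.singleton_append, happ, hV, wordVal_single]
  refine ⟨l, hl, ?_, ?_⟩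
  · rintro l1 s l2 rfl ⟨k, hk⟩
    have h1 : V (l1 ++ l2) = c := by
      rw [← hl, happ, happ, hcons, hk, pow_mul, cyclicFreeProduct_gen_pow, one_pow, mul_one]
    have := hmin _ h1
    simp at this
  · rintro l1 ⟨i, a⟩ ⟨j, b⟩ l2 rfl hij
    simp only at hij
    subst hij
    have h1 : V (l1 ++ (i, a + b) :: l2) = c := by
      rw [← hl, happ, happ, hcons, hcons, hcons]
      simp only
      rw [add_comm, pow_add]
      simp only [mul_assoc]
    have := hmin _ h1
    simp at this

lemma traj_word {m n : ℕ} (σ : Fin m → Equiv.Perm (Fin n)) (l : List (Fin m × ℕ)) (i0 : Fin m)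
    (x : Fin n) (k : ℕ) :
    traj σ (fun k => (l[k]?.getD (i0, 0)).1) (fun k => (l[k]?.getD (i0, 0)).2) x k =
      wordVal σ (l.take k) x := by
  induction k with
  | zero => simp [traj, wordVal]
  | succ k ih =>
    rw [traj, ih, List.take_add_one, wordVal_append, Equiv.Perm.mul_apply]
    cases h : l[k]? with
    | none => simp [wordVal]
    | some s => simp [wordVal]

/-- a homomorphism killing the centre factors through the free product -/
lemma hom_factor {m : ℕ} {p : Fin m → ℕ} {n : ℕ} (ρ : TorusKnotGroup m p →* Equiv.Perm (Fin n))
    (h : ∀ i, genTup ρ i ^ p i = 1) :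
    ∃ ψ : CyclicFreeProduct m p →* Equiv.Perm (Fin n), (∀ i, ψ (PresentedGroup.of i) = genTup ρ i) ∧
      ∀ g, ρ g = ψ (PhiMap m p g) := by
  have hrel : ∀ r ∈ cyclicRels m p, (FreeGroup.lift (genTup ρ)) r = 1 := by
    rintro r ⟨i, rfl⟩
    rw [map_pow, FreeGroup.lift_apply_of, h]
  refine ⟨PresentedGroup.toGroup hrel, fun i => PresentedGroup.toGroup.of hrel, fun g => ?_⟩
  have : ρ = (PresentedGroup.toGroup hrel).comp (PhiMap m p) := by
    apply PresentedGroup.ext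
    intro i
    rw [MonoidHom.comp_apply]
    have h1 : PhiMap m p (PresentedGroup.of i) = PresentedGroup.of i := PresentedGroup.toGroup.of _
    rw [h1, PresentedGroup.toGroup.of]
    rfl
  exact congrArg (fun f => f g) this

lemma fix_tendsto (m : ℕ) (p : Fin m → ℕ) (hp : ∀ i, 2 ≤ p i)
    (g : TorusKnotGroup m p) (hg : g ∉ (PhiMap m p).ker) :
    Tendsto (fun n : ℕ => (Nat.card {y : (TorusKnotGroup m p →* Equiv.Perm (Fin n)) × Fin n //
      (∀ i, genTup y.1 i ^ p i = 1) ∧ y.1 g y.2 = y.2} : ℝ) / (n * tupCount m p n)) atTop (𝓝 0) := by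
  obtain ⟨l, hl, hred1, hred2⟩ := exists_reduced p hp (PhiMap m p g)
  have hl0 : l ≠ [] := by
    rintro rfl
    apply hg
    rw [MonoidHom.mem_ker, ← hl, wordVal_nil]
  have hr : 0 < l.length := List.length_pos_iff.mpr hl0
  set i0 : Fin m := (l[0]).1 with hi0
  have hsplit : ∀ k (hk : k < l.length), l = l.take k ++ l[k] :: l.drop (k+1) := by
    intro k hk
    rw [← List.drop_eq_getElem_cons hk, List.take_append_drop]
  have hsplit2 : ∀ k (hk : k + 1 < l.length), l = l.take k ++ l[k] :: l[k+1] :: l.drop (k+1+1) := by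
    intro k hk
    rw [← List.drop_eq_getElem_cons hk]
    exact hsplit k (by omega)
  have hmain := word_fix_tendsto m p hp (fun k => (l[k]?.getD (i0, 0)).1)
    (fun k => (l[k]?.getD (i0, 0)).2) l.length hr (by
      intro k hk
      rw [List.getElem?_eq_getElem hk, List.getElem?_eq_getElem (by omega : k < l.length)]
      exact hred2 _ _ _ _ (hsplit2 k hk)) (by
      intro k hk
      rw [List.getElem?_eq_getElem hk]
      exact hred1 _ _ _ (hsplit k hk))
  refine squeeze_zero (fun n => by positivity) (fun n => ?_) hmain
  apply div_le_div_of_nonneg_right _ (by positivity)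
  rw [Nat.cast_le]
  have := finite_homs m p n
  refine Nat.card_le_card_of_injective (fun y => ⟨(genTup y.1.1, y.1.2), y.2.1, ?_⟩) ?_
  · rw [traj_word, List.take_length]
    obtain ⟨ψ, h1, h2⟩ := hom_factor y.1.1 y.2.1
    have h3 := y.2.2
    rw [h2, ← hl, wordVal_map] at h3
    simp only [h1] at h3
    exact h3
  · intro y y' h
    have h1 := congrArg (fun u => u.1.1) h
    have h2 := congrArg (fun u => u.1.2) h
    exact Subtype.ext (Prod.ext (genTup_injective h1) h2)

lemma card_split {α : Type*} [Finite α] (P Q : α → Prop) :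
    Nat.card {x // P x} = Nat.card {x // P x ∧ Q x} + Nat.card {x // P x ∧ ¬ Q x} := by
  classical
  let _ := Fintype.ofFinite α
  simp only [Nat.card_eq_fintype_card, Fintype.card_subtype]
  rw [← Finset.filter_filter, ← Finset.filter_filter, Finset.card_filter_add_card_filter_not]

lemma card_prod_subtype {α : Type*} {n : ℕ} (P : α → Prop) :
    Nat.card {y : α × Fin n // P y.1} = Nat.card {x // P x} * n := by
  have e : {y : α × Fin n // P y.1} ≃ {x // P x} × Fin n :=
    { toFun := fun y => (⟨y.1.1, y.2⟩, y.1.2)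
      invFun := fun y => ⟨(y.1.1, y.2), y.1.2⟩
      left_inv := fun _ => rfl
      right_inv := fun _ => rfl }
  rw [Nat.card_congr e, Nat.card_prod, Nat.card_fin]

lemma card_mono_subtype {α : Type*} [Finite α] {P Q : α → Prop} (h : ∀ x, P x → Q x) :
    Nat.card {x // P x} ≤ Nat.card {x // Q x} :=
  Nat.card_le_card_of_injective (Subtype.map id h) (Subtype.map_injective h Function.injective_id)

/-- the basic counts and their relations -/
lemma basic_counts (m : ℕ) (p : Fin m → ℕ) (hp : ∀ i, 2 ≤ p i)
    (h : ∑ i, (1 : ℝ) / (p i : ℝ) < (m : ℝ) - 1) :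
    ∃ X C : ℕ → ℕ, Tendsto (fun n => (X n : ℝ) / tupCount m p n) atTop (𝓝 1) ∧
      Tendsto (fun n => (C n : ℝ) / tupCount m p n) atTop (𝓝 0) ∧
      (∀ n, X n = Nat.card {ρ : TorusKnotGroup m p →* Equiv.Perm (Fin n) //
        TupTrans (genTup ρ) ∧ ∀ i, genTup ρ i ^ p i = 1}) ∧
      (∀ n, C n = Nat.card {ρ : TorusKnotGroup m p →* Equiv.Perm (Fin n) //
        TupTrans (genTup ρ) ∧ ¬ ∀ i, genTup ρ i ^ p i = 1}) ∧
      ∀ n, Nat.card {ρ : TorusKnotGroup m p →* Equiv.Perm (Fin n) // TupTrans (genTup ρ)} =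
        X n + C n := by
  refine ⟨fun n => _, fun n => _, ?_, ?_, fun n => rfl, fun n => rfl, fun n => ?_⟩
  · have h1 := (nontrans_tendsto m p hp h).const_sub 1
    rw [sub_zero] at h1
    refine h1.congr fun n => ?_
    have hT : (0 : ℝ) < tupCount m p n := by exact_mod_cast tupCount_pos m p n
    have hs := card_split (fun σ : Fin m → Equiv.Perm (Fin n) => ∀ i, σ i ^ p i = 1) TupTrans
    rw [card_tup] at hs
    have h2 := card_homs (p := p) (fun σ : Fin m → Equiv.Perm (Fin n) =>
      TupTrans σ ∧ ∀ i, σ i ^ p i = 1)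
    have h3 : Nat.card {σ : Fin m → Equiv.Perm (Fin n) // (∀ i j, σ i ^ p i = σ j ^ p j) ∧
        TupTrans σ ∧ ∀ i, σ i ^ p i = 1} =
        Nat.card {σ : Fin m → Equiv.Perm (Fin n) // (∀ i, σ i ^ p i = 1) ∧ TupTrans σ} := by
      refine Nat.card_congr (Equiv.subtypeEquivRight fun σ => ?_)
      exact ⟨fun a => ⟨a.2.2, a.2.1⟩, fun a => ⟨fun i j => by rw [a.1, a.1], a.2, a.1⟩⟩
    beta_reduce
    rw [h2, h3]
    have hs' : (tupCount m p n : ℝ) = _ := congrArg (Nat.cast (R := ℝ)) hs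
    rw [Nat.cast_add] at hs'
    rw [eq_div_iff hT.ne', sub_mul, div_mul_cancel₀ _ hT.ne', one_mul]
    linarith
  · refine (central_tendsto m p hp h).congr fun n => ?_
    beta_reduce
    rw [card_homs (p := p) (fun σ : Fin m → Equiv.Perm (Fin n) =>
      TupTrans σ ∧ ¬ ∀ i, σ i ^ p i = 1)]
  · have := finite_homs m p n
    exact card_split _ _

theorem irs_limit_torusKnotGroup (m : ℕ) (p : Fin m → ℕ) (hp : ∀ i, 2 ≤ p i)
    (h : ∑ i, (1 : ℝ) / (p i : ℝ) < (m : ℝ) - 1)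
    (g : TorusKnotGroup m p) (hg : g ≠ 1) :
    (g ∉ (PhiMap m p).ker →
      (fun n : ℕ => subgroupExp (TorusKnotGroup m p) n
          (fun H => (fixedCosetCount g H : ℝ))) =o[Filter.atTop] (fun n : ℕ => (n : ℝ))) ∧
    (g ∈ (PhiMap m p).ker →
      Filter.Tendsto (fun n : ℕ => subgroupExp (TorusKnotGroup m p) n
          (fun H => (fixedCosetCount g H : ℝ)) / (n : ℝ)) Filter.atTop (𝓝 1)) := by
  have hfin := finite_homs m p
  obtain ⟨X, C, hX, hC, hXd, hCd, hA⟩ := basic_counts m p hp h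
  have hXC : Tendsto (fun n => (X n : ℝ) / tupCount m p n + (C n : ℝ) / tupCount m p n) atTop (𝓝 1) := by
    simpa using hX.add hC
  -- the number of transitive homomorphisms is eventually positive
  have hXpos : ∀ᶠ n in atTop, 0 < (X n : ℝ) / tupCount m p n := hX.eventually (lt_mem_nhds one_pos)
  have hexp : ∀ n : ℕ, 0 < n → subgroupExp (TorusKnotGroup m p) n
      (fun H => (fixedCosetCount g H : ℝ)) =
      (Nat.card {y : (TorusKnotGroup m p →* Equiv.Perm (Fin n)) × Fin n //
        TupTrans (genTup y.1) ∧ y.1 g y.2 = y.2} : ℝ) / ((X n : ℝ) + C n) := by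
    intro n hn
    have := hfin n
    rw [subgroupExp_eq (⟨0, hn⟩ : Fin n) g]
    simp only [homTrans_iff]
    rw [hA, Nat.cast_add]
  constructor
  · intro hgk
    rw [isLittleO_iff_tendsto' (by
      filter_upwards [eventually_gt_atTop 0] with n hn h0
      exact absurd h0 (by positivity))]
    have hW := fix_tendsto m p hp g hgk
    have hlim := (hC.add hW).div hXC one_ne_zero
    rw [add_zero, zero_div] at hlim
    refine squeeze_zero' (Eventually.of_forall fun n => ?_) ?_ hlim
    · unfold subgroupExp
      exact div_nonneg (div_nonneg (tsum_nonneg fun _ => by positivity) (by positivity)) (by positivity)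
    filter_upwards [eventually_gt_atTop 0, hXpos] with n hn hxp
    have := hfin n
    have hT : (0 : ℝ) < tupCount m p n := by exact_mod_cast tupCount_pos m p n
    have hnR : (0 : ℝ) < n := by exact_mod_cast hn
    have hX0 : (0 : ℝ) < X n := by
      rcases (div_pos_iff.mp hxp) with h | h
      · exact h.1
      · linarith [h.2]
    have hA0 : (0 : ℝ) < X n + C n := by positivity
    rw [hexp n hn]
    set W : ℝ := (Nat.card {y : (TorusKnotGroup m p →* Equiv.Perm (Fin n)) × Fin n //
      (∀ i, genTup y.1 i ^ p i = 1) ∧ y.1 g y.2 = y.2} : ℝ) with hWd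
    have hF : (Nat.card {y : (TorusKnotGroup m p →* Equiv.Perm (Fin n)) × Fin n //
        TupTrans (genTup y.1) ∧ y.1 g y.2 = y.2} : ℝ) ≤ W + C n * n := by
      rw [card_split _ (fun y : (TorusKnotGroup m p →* Equiv.Perm (Fin n)) × Fin n =>
        ∀ i, genTup y.1 i ^ p i = 1), Nat.cast_add]
      apply add_le_add
      · rw [hWd, Nat.cast_le]
        exact card_mono_subtype fun y hy => ⟨hy.2, hy.1.2⟩
      · rw [hCd, ← Nat.cast_mul, ← card_prod_subtype, Nat.cast_le]
        exact card_mono_subtype fun y hy => ⟨hy.1.1, hy.2⟩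
    have e : ((C n : ℝ) / tupCount m p n + W / (n * tupCount m p n)) /
        ((X n : ℝ) / tupCount m p n + (C n : ℝ) / tupCount m p n) =
        (W + C n * n) / (X n + C n) / n := by
      field_simp
      ring
    refine le_trans ?_ (le_of_eq e.symm)
    gcongr
  · intro hgk
    have hlim := hX.div hXC one_ne_zero
    rw [div_one] at hlim
    have hrel : ∀ᶠ n : ℕ in atTop,
        ((X n : ℝ) / tupCount m p n) / ((X n : ℝ) / tupCount m p n + (C n : ℝ) / tupCount m p n) ≤
        subgroupExp (TorusKnotGroup m p) n (fun H => (fixedCosetCount g H : ℝ)) / (n : ℝ) ∧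
        subgroupExp (TorusKnotGroup m p) n (fun H => (fixedCosetCount g H : ℝ)) / (n : ℝ) ≤ 1 := by
      filter_upwards [eventually_gt_atTop 0, hXpos] with n hn hxp
      have := hfin n
      have hT : (0 : ℝ) < tupCount m p n := by exact_mod_cast tupCount_pos m p n
      have hnR : (0 : ℝ) < n := by exact_mod_cast hn
      have hX0 : (0 : ℝ) < X n := by
        rcases (div_pos_iff.mp hxp) with h | h
        · exact h.1
        · linarith [h.2]
      have hA0 : (0 : ℝ) < X n + C n := by positivity
      rw [hexp n hn]
      have hF1 : (X n : ℝ) * n ≤ (Nat.card {y : (TorusKnotGroup m p →* Equiv.Perm (Fin n)) × Fin n //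
          TupTrans (genTup y.1) ∧ y.1 g y.2 = y.2} : ℝ) := by
        rw [hXd, ← Nat.cast_mul, ← card_prod_subtype, Nat.cast_le]
        refine card_mono_subtype fun y hy => ⟨hy.1, ?_⟩
        obtain ⟨ψ, _, h2⟩ := hom_factor y.1 hy.2
        rw [h2, (MonoidHom.mem_ker).mp hgk, map_one]
        rfl
      have hF2 : (Nat.card {y : (TorusKnotGroup m p →* Equiv.Perm (Fin n)) × Fin n //
          TupTrans (genTup y.1) ∧ y.1 g y.2 = y.2} : ℝ) ≤ (X n + C n) * n := by
        rw [← Nat.cast_add, ← hA, ← Nat.cast_mul, ← card_prod_subtype, Nat.cast_le]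
        exact card_mono_subtype fun y hy => hy.1
      constructor
      · have e : ((X n : ℝ) / tupCount m p n) /
            ((X n : ℝ) / tupCount m p n + (C n : ℝ) / tupCount m p n) =
            (X n * n) / (X n + C n) / n := by
          field_simp
        rw [e]
        gcongr
      · rw [div_div, div_le_one (by positivity)]
        exact hF2
    exact tendsto_of_tendsto_of_tendsto_of_le_of_le' hlim tendsto_const_nhds
      (hrel.mono fun n hn => hn.1) (hrel.mono fun n hn => hn.2)
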